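/- arXiv:1912.00135 — 2 statements merged into one kernel-verified Lean document; each statement's English description precedes it below -/
import Mathlib

section
/- Let N ≥ 2 be an integer and q ∈ (1, ∞). There exists a constant C = C(N, q) > 0 such that for every ε > 0 and every Schwartz vector field F ∈ 𝓢(ℝ^N; ℂ^N), the function U^ε(x) = −(2π)^{−N} ∫_{ℝ^N ∖ {0}} e^{i x·ξ} e^{−ε‖ξ‖²} (i ξ · 𝓕F(ξ)) / ‖ξ‖² dξ is well defined (the integrand is absolutely integrable) and smooth, and satisfies ‖∇U^ε‖_{L^q(ℝ^N)} ≤ C ‖F‖_{L^q(ℝ^N)} and ‖D²U^ε‖_{L^q(ℝ^N)} ≤ C ‖div F‖_{L^q(ℝ^N)}, with C independent of ε and F. -/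
open Real MeasureTheory
open scoped RealInnerProductSpace

/-- The `L^p` norm (real exponent `p`) of `f` with respect to the measure `μ`. -/
noncomputable def LqNorm {α : Type*} [MeasurableSpace α] {E : Type*} [NormedAddCommGroup E]
    (μ : Measure α) (p : ℝ) (f : α → E) : ℝ :=
  (∫ x, ‖f x‖ ^ p ∂μ) ^ (1 / p)

/-!
For each pair of conjugate exponents there is a nonnegative function `B` on `ℂ × ℂ` with
`B(z, w) ≲ |z| ^ p + |w| ^ q` whose Hessian controls `|dz| |dw|` from below (Nazarov-Treil). Its
composition with two heat flows therefore has an integral that decreases in time, and the total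
loss bounds `∬ |∂ᵢ e^{tΔ} f| |∂ⱼ e^{tΔ} g| dx dt` by a multiple of `‖f‖_p ^ p + ‖g‖_q ^ q`, hence,
by scaling `f` and `g`, of `‖f‖_p ‖g‖_q`.

Put `Rᵢⱼ = ∂ᵢ ∂ⱼ Δ⁻¹`. Integrating
`d/dt ∫ (e^{2tΔ} Rᵢⱼ f) g = -2 ∫ (∂ᵢ e^{tΔ} f) (∂ⱼ e^{tΔ} g)` from `ε / 2` to infinity gives, by
duality, an `L^p` bound for `e^{εΔ} Rᵢⱼ` that is uniform in `ε`. This is all that is needed, since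
`∂ᵢ U = ∑ⱼ e^{εΔ} Rᵢⱼ Fⱼ` and `∂ₖ ∂ᵢ U = e^{εΔ} Rₖᵢ (div F)`.
-/

section

open Filter Topology
open scoped SchwartzMap FourierTransform LineDeriv ContDiff

/-! ### The Bellman function -/

section Bellman

variable {a σ κ : ℝ}

/-- The weight `ρ(x, y) = |x| ^ (2 a) + y ^ 2 + κ ^ 2` in the Bellman function. The parameter
`κ ≠ 0` keeps it away from zero. -/
noncomputable def bellmanWeight (a κ : ℝ) (z : ℝ × ℝ) : ℝ :=
  (z.1 ^ 2) ^ a + z.2 ^ 2 + κ ^ 2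

/-- The constant in front of the `y`-term of the Bellman function, chosen so that this term absorbs
the indefinite part of the Hessian of `x ^ 2 * ρ ^ σ`. -/
noncomputable def bellmanConst (a σ : ℝ) : ℝ :=
  a * (1 + 2 * σ + 16 * a ^ 2 * σ ^ 2)

/-- The Bellman function
`B(x, y) = A * ((y ^ 2 + κ ^ 2) ^ (1 - σ) - (κ ^ 2) ^ (1 - σ)) + x ^ 2 * ρ(x, y) ^ σ`
of Nazarov and Treil, regularized by `κ`. It is adapted to the conjugate exponents `a + 1` for `x`
and `2 - 2 * σ` for `y`, where `a * (1 - 2 * σ) = 1`. -/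
noncomputable def bellman (a σ κ : ℝ) (z : ℝ × ℝ) : ℝ :=
  bellmanConst a σ * ((z.2 ^ 2 + κ ^ 2) ^ (1 - σ) - (κ ^ 2) ^ (1 - σ)) +
    z.1 ^ 2 * bellmanWeight a κ z ^ σ

/-- The partial derivative `∂B/∂x` of the Bellman function. -/
noncomputable def bellmanX (a σ κ : ℝ) (z : ℝ × ℝ) : ℝ :=
  z.1 * (2 * bellmanWeight a κ z ^ σ +
    2 * a * σ * (z.1 ^ 2) ^ a * bellmanWeight a κ z ^ (σ - 1))

/-- The partial derivative `∂B/∂y` of the Bellman function. -/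
noncomputable def bellmanY (a σ κ : ℝ) (z : ℝ × ℝ) : ℝ :=
  z.2 * (2 * (1 - σ) * bellmanConst a σ * (z.2 ^ 2 + κ ^ 2) ^ (-σ) +
    2 * σ * z.1 ^ 2 * bellmanWeight a κ z ^ (σ - 1))

/-- The second derivative `∂²B/∂x²` of the Bellman function. -/
noncomputable def bellmanXX (a σ κ : ℝ) (z : ℝ × ℝ) : ℝ :=
  2 * bellmanWeight a κ z ^ σ +
    (6 * a + 4 * a ^ 2) * σ * (z.1 ^ 2) ^ a * bellmanWeight a κ z ^ (σ - 1) +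
    4 * a ^ 2 * σ * (σ - 1) * ((z.1 ^ 2) ^ a) ^ 2 * bellmanWeight a κ z ^ (σ - 2)

/-- The second derivative `∂²B/∂x∂y` of the Bellman function. -/
noncomputable def bellmanXY (a σ κ : ℝ) (z : ℝ × ℝ) : ℝ :=
  4 * σ * z.1 * z.2 * bellmanWeight a κ z ^ (σ - 1) +
    4 * a * σ * (σ - 1) * z.1 * z.2 * (z.1 ^ 2) ^ a * bellmanWeight a κ z ^ (σ - 2)

/-- The second derivative `∂²B/∂y²` of the Bellman function. -/
noncomputable def bellmanYY (a σ κ : ℝ) (z : ℝ × ℝ) : ℝ :=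
  2 * (1 - σ) * bellmanConst a σ * (z.2 ^ 2 + κ ^ 2) ^ (-σ) -
    4 * σ * (1 - σ) * bellmanConst a σ * z.2 ^ 2 * (z.2 ^ 2 + κ ^ 2) ^ (-σ - 1) +
    2 * σ * z.1 ^ 2 * bellmanWeight a κ z ^ (σ - 1) +
    4 * σ * (σ - 1) * z.1 ^ 2 * z.2 ^ 2 * bellmanWeight a κ z ^ (σ - 2)

lemma bellmanWeight_pos (hκ : κ ≠ 0) (z : ℝ × ℝ) : 0 < bellmanWeight a κ z := by
  unfold bellmanWeight; positivity

lemma hasFDerivAt_sq_rpow_fst (ha : 1 ≤ a) (z : ℝ × ℝ) :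
    HasFDerivAt (fun z : ℝ × ℝ ↦ (z.1 ^ 2) ^ a)
      ((2 * a * z.1 * (z.1 ^ 2) ^ (a - 1)) • ContinuousLinearMap.fst ℝ ℝ ℝ) z := by
  refine (((hasFDerivAt_fst (p := z)).pow 2).rpow_const (Or.inr ha)).congr_fderiv ?_
  ext <;> simp
  ring

lemma hasFDerivAt_bellmanWeight (ha : 1 ≤ a) (z : ℝ × ℝ) :
    HasFDerivAt (bellmanWeight a κ)
      ((2 * a * z.1 * (z.1 ^ 2) ^ (a - 1)) • ContinuousLinearMap.fst ℝ ℝ ℝ +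
        (2 * z.2) • ContinuousLinearMap.snd ℝ ℝ ℝ) z := by
  refine (((hasFDerivAt_sq_rpow_fst ha z).add
    ((hasFDerivAt_snd (p := z)).pow 2)).add_const (κ ^ 2)).congr_fderiv ?_
  ext <;> simp

lemma hasFDerivAt_bellmanWeight_rpow (ha : 1 ≤ a) (hκ : κ ≠ 0) (s : ℝ) (z : ℝ × ℝ) :
    HasFDerivAt (fun z ↦ bellmanWeight a κ z ^ s)
      ((s * bellmanWeight a κ z ^ (s - 1)) •
        ((2 * a * z.1 * (z.1 ^ 2) ^ (a - 1)) • ContinuousLinearMap.fst ℝ ℝ ℝ +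
          (2 * z.2) • ContinuousLinearMap.snd ℝ ℝ ℝ)) z :=
  (hasFDerivAt_bellmanWeight ha z).rpow_const (Or.inl (bellmanWeight_pos hκ z).ne')

lemma hasFDerivAt_sq_add_sq_rpow_snd (hκ : κ ≠ 0) (s : ℝ) (z : ℝ × ℝ) :
    HasFDerivAt (fun z : ℝ × ℝ ↦ (z.2 ^ 2 + κ ^ 2) ^ s)
      ((2 * s * z.2 * (z.2 ^ 2 + κ ^ 2) ^ (s - 1)) • ContinuousLinearMap.snd ℝ ℝ ℝ) z := by
  refine ((((hasFDerivAt_snd (p := z)).pow 2).add_const (κ ^ 2)).rpow_const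
    (Or.inl (by positivity))).congr_fderiv ?_
  ext <;> simp
  ring

lemma sq_mul_sq_rpow_sub_one (ha : 1 ≤ a) (x : ℝ) : x ^ 2 * (x ^ 2) ^ (a - 1) = (x ^ 2) ^ a := by
  rw [← rpow_one_add' (sq_nonneg x) (by linarith)]
  ring_nf

lemma hasFDerivAt_bellman (ha : 1 ≤ a) (hκ : κ ≠ 0) (z : ℝ × ℝ) :
    HasFDerivAt (bellman a σ κ) (bellmanX a σ κ z • ContinuousLinearMap.fst ℝ ℝ ℝ +
      bellmanY a σ κ z • ContinuousLinearMap.snd ℝ ℝ ℝ) z := by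
  have h := (((hasFDerivAt_sq_add_sq_rpow_snd hκ (1 - σ) z).sub_const
    ((κ ^ 2) ^ (1 - σ))).const_mul (bellmanConst a σ)).add
    (((hasFDerivAt_fst (𝕜 := ℝ) (p := z)).pow 2).mul (hasFDerivAt_bellmanWeight_rpow ha hκ σ z))
  refine h.congr_fderiv ?_
  ext
  · simp [bellmanX, ← sq_mul_sq_rpow_sub_one ha z.1]
    ring
  · simp [bellmanY]
    ring_nf

lemma hasFDerivAt_bellmanX (ha : 1 ≤ a) (hκ : κ ≠ 0) (z : ℝ × ℝ) :
    HasFDerivAt (bellmanX a σ κ) (bellmanXX a σ κ z • ContinuousLinearMap.fst ℝ ℝ ℝ +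
      bellmanXY a σ κ z • ContinuousLinearMap.snd ℝ ℝ ℝ) z := by
  have h := (hasFDerivAt_fst (𝕜 := ℝ) (p := z)).mul
    (((hasFDerivAt_bellmanWeight_rpow ha hκ σ z).const_mul 2).add
      (((hasFDerivAt_sq_rpow_fst ha z).const_mul (2 * a * σ)).mul
        (hasFDerivAt_bellmanWeight_rpow ha hκ (σ - 1) z)))
  refine h.congr_fderiv ?_
  have hσ : σ - 1 - 1 = σ - 2 := by ring
  ext
  · simp [bellmanXX, hσ, ← sq_mul_sq_rpow_sub_one ha z.1]
    ring
  · simp [bellmanXY, hσ]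
    ring

lemma hasFDerivAt_bellmanY (ha : 1 ≤ a) (hκ : κ ≠ 0) (z : ℝ × ℝ) :
    HasFDerivAt (bellmanY a σ κ) (bellmanXY a σ κ z • ContinuousLinearMap.fst ℝ ℝ ℝ +
      bellmanYY a σ κ z • ContinuousLinearMap.snd ℝ ℝ ℝ) z := by
  have h := (hasFDerivAt_snd (𝕜 := ℝ) (p := z)).mul
    (((hasFDerivAt_sq_add_sq_rpow_snd hκ (-σ) z).const_mul (2 * (1 - σ) * bellmanConst a σ)).add
      ((((hasFDerivAt_fst (𝕜 := ℝ) (p := z)).pow 2).const_mul (2 * σ)).mul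
        (hasFDerivAt_bellmanWeight_rpow ha hκ (σ - 1) z)))
  refine h.congr_fderiv ?_
  have hσ : σ - 1 - 1 = σ - 2 := by ring
  ext
  · simp [bellmanXY, hσ, ← sq_mul_sq_rpow_sub_one ha z.1]
    ring
  · simp [bellmanYY, hσ]
    ring

lemma fderiv_bellman (ha : 1 ≤ a) (hκ : κ ≠ 0) :
    fderiv ℝ (bellman a σ κ) = fun z ↦ bellmanX a σ κ z • ContinuousLinearMap.fst ℝ ℝ ℝ +
      bellmanY a σ κ z • ContinuousLinearMap.snd ℝ ℝ ℝ :=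
  funext fun z ↦ (hasFDerivAt_bellman ha hκ z).fderiv

lemma contDiff_sq_rpow_fst (ha : 1 ≤ a) : ContDiff ℝ 1 fun z : ℝ × ℝ ↦ (z.1 ^ 2) ^ a :=
  (contDiff_fst.pow 2).rpow_const_of_le (by exact_mod_cast ha)

lemma contDiff_bellmanWeight_rpow (ha : 1 ≤ a) (hκ : κ ≠ 0) (s : ℝ) :
    ContDiff ℝ 1 fun z ↦ bellmanWeight a κ z ^ s :=
  (((contDiff_sq_rpow_fst ha).add (contDiff_snd.pow 2)).add contDiff_const).rpow_const_of_ne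
    fun z ↦ (bellmanWeight_pos hκ z).ne'

lemma contDiff_bellman (ha : 1 ≤ a) (hκ : κ ≠ 0) : ContDiff ℝ 2 (bellman a σ κ) := by
  have hρ := contDiff_bellmanWeight_rpow ha hκ
  have hm := contDiff_sq_rpow_fst ha
  have hy : ContDiff ℝ 1 fun z : ℝ × ℝ ↦ (z.2 ^ 2 + κ ^ 2) ^ (-σ) :=
    ContDiff.rpow_const_of_ne (by fun_prop) fun z ↦ by positivity
  refine contDiff_succ_iff_fderiv (n := 1).2
    ⟨fun z ↦ (hasFDerivAt_bellman ha hκ z).differentiableAt, by simp, ?_⟩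
  rw [fderiv_bellman ha hκ]
  have hX : ContDiff ℝ 1 (bellmanX a σ κ) :=
    contDiff_fst.mul ((contDiff_const.mul (hρ σ)).add ((contDiff_const.mul hm).mul (hρ (σ - 1))))
  have hY : ContDiff ℝ 1 (bellmanY a σ κ) :=
    contDiff_snd.mul ((contDiff_const.mul hy).add
      ((contDiff_const.mul (contDiff_fst.pow 2)).mul (hρ (σ - 1))))
  exact (hX.smul contDiff_const).add (hY.smul contDiff_const)

lemma iteratedFDeriv_two_bellman (ha : 1 ≤ a) (hκ : κ ≠ 0) (z v : ℝ × ℝ) :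
    iteratedFDeriv ℝ 2 (bellman a σ κ) z (fun _ ↦ v) =
      bellmanXX a σ κ z * v.1 ^ 2 + 2 * bellmanXY a σ κ z * (v.1 * v.2) +
        bellmanYY a σ κ z * v.2 ^ 2 := by
  have h : HasFDerivAt (fun z ↦ bellmanX a σ κ z • ContinuousLinearMap.fst ℝ ℝ ℝ +
      bellmanY a σ κ z • ContinuousLinearMap.snd ℝ ℝ ℝ) _ z :=
    ((hasFDerivAt_bellmanX ha hκ z).smul_const (ContinuousLinearMap.fst ℝ ℝ ℝ)).fun_add
      ((hasFDerivAt_bellmanY ha hκ z).smul_const (ContinuousLinearMap.snd ℝ ℝ ℝ))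
  rw [iteratedFDeriv_two_apply, fderiv_bellman ha hκ, h.fderiv]
  simp
  ring

lemma sq_rpow_fst_le_bellmanWeight (z : ℝ × ℝ) : (z.1 ^ 2) ^ a ≤ bellmanWeight a κ z := by
  unfold bellmanWeight; nlinarith

lemma sq_snd_le_bellmanWeight (z : ℝ × ℝ) : z.2 ^ 2 ≤ bellmanWeight a κ z := by
  have : 0 ≤ (z.1 ^ 2) ^ a := by positivity
  unfold bellmanWeight; nlinarith

lemma sq_fst_mul_bellmanWeight_rpow_sq_le (ha : 1 ≤ a) (hσ : a * (1 - 2 * σ) = 1) (hκ : κ ≠ 0)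
    (z : ℝ × ℝ) : z.1 ^ 2 * (bellmanWeight a κ z ^ σ) ^ 2 ≤ bellmanWeight a κ z := by
  have hρ := bellmanWeight_pos (a := a) hκ z
  calc z.1 ^ 2 * (bellmanWeight a κ z ^ σ) ^ 2
      = ((z.1 ^ 2) ^ a) ^ (1 - 2 * σ) * bellmanWeight a κ z ^ (2 * σ) := by
        rw [← rpow_mul (sq_nonneg _), hσ, rpow_one, ← rpow_mul_natCast hρ.le]
        ring_nf
    _ ≤ bellmanWeight a κ z ^ (1 - 2 * σ) * bellmanWeight a κ z ^ (2 * σ) := by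
        have : 0 ≤ 1 - 2 * σ := by nlinarith
        gcongr
        exact sq_rpow_fst_le_bellmanWeight z
    _ = bellmanWeight a κ z := by rw [← rpow_add hρ]; simp

lemma bellmanWeight_rpow_sub_one (hκ : κ ≠ 0) (z : ℝ × ℝ) :
    bellmanWeight a κ z ^ (σ - 1) = bellmanWeight a κ z ^ σ / bellmanWeight a κ z :=
  rpow_sub_one (bellmanWeight_pos hκ z).ne' σ

lemma bellmanWeight_rpow_sub_two (hκ : κ ≠ 0) (z : ℝ × ℝ) :
    bellmanWeight a κ z ^ (σ - 2) = bellmanWeight a κ z ^ σ / bellmanWeight a κ z ^ 2 := by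
  exact_mod_cast rpow_sub_natCast (bellmanWeight_pos hκ z).ne' σ 2

lemma le_bellmanXX (ha : 1 ≤ a) (hσ : a * (1 - 2 * σ) = 1) (hκ : κ ≠ 0) (z : ℝ × ℝ) :
    2 * bellmanWeight a κ z ^ σ ≤ bellmanXX a σ κ z := by
  have hρ := bellmanWeight_pos (a := a) hκ z
  have hmρ := sq_rpow_fst_le_bellmanWeight (a := a) (κ := κ) z
  have hσ0 : 0 ≤ σ := by nlinarith
  rw [bellmanXX, bellmanWeight_rpow_sub_one hκ, bellmanWeight_rpow_sub_two hκ]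
  set ρ := bellmanWeight a κ z
  set m := (z.1 ^ 2) ^ a
  have : 0 ≤ m := by positivity
  have hdiff : 0 ≤ σ * ρ ^ σ * (m / ρ ^ 2) *
      (6 * a * ρ + 4 * a ^ 2 * (ρ - m) + 4 * a ^ 2 * σ * m) := by
    have := sub_nonneg.2 hmρ
    positivity
  refine le_of_sub_nonneg (hdiff.trans_eq ?_)
  field_simp
  ring

lemma abs_bellmanXY_le (ha : 1 ≤ a) (hσ : a * (1 - 2 * σ) = 1) (hκ : κ ≠ 0) (z : ℝ × ℝ) :
    |bellmanXY a σ κ z| ≤ 4 * a * σ := by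
  have hρ := bellmanWeight_pos (a := a) hκ z
  have hmρ := sq_rpow_fst_le_bellmanWeight (a := a) (κ := κ) z
  have hy := sq_snd_le_bellmanWeight (a := a) (κ := κ) z
  have hx := sq_fst_mul_bellmanWeight_rpow_sq_le ha hσ hκ z
  have hσ0 : 0 ≤ σ := by nlinarith
  rw [bellmanXY, bellmanWeight_rpow_sub_one hκ, bellmanWeight_rpow_sub_two hκ]
  set ρ := bellmanWeight a κ z
  set m := (z.1 ^ 2) ^ a
  have hm : 0 ≤ m := by positivity
  have hxy : |z.1 * ρ ^ σ * z.2| ≤ ρ :=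
    abs_le_of_sq_le_sq (by nlinarith [sq_nonneg z.2]) hρ.le
  have hbracket : |ρ - a * (1 - σ) * m| ≤ a * ρ :=
    abs_le.2 ⟨by nlinarith [mul_nonneg hσ0 hm], by nlinarith⟩
  calc |4 * σ * z.1 * z.2 * (ρ ^ σ / ρ) + 4 * a * σ * (σ - 1) * z.1 * z.2 * m * (ρ ^ σ / ρ ^ 2)|
      = |4 * σ / ρ ^ 2 * ((z.1 * ρ ^ σ * z.2) * (ρ - a * (1 - σ) * m))| := by
        congr 1; field_simp; ring
    _ = 4 * σ / ρ ^ 2 * (|z.1 * ρ ^ σ * z.2| * |ρ - a * (1 - σ) * m|) := by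
        rw [abs_mul, abs_mul (z.1 * ρ ^ σ * z.2), abs_of_nonneg (by positivity : 0 ≤ 4 * σ / ρ ^ 2)]
    _ ≤ 4 * σ / ρ ^ 2 * (ρ * (a * ρ)) := by gcongr
    _ = 4 * a * σ := by field_simp

lemma le_bellmanConst_mul (ha : 1 ≤ a) (hσ : a * (1 - 2 * σ) = 1) :
    1 + 2 * σ + 16 * a ^ 2 * σ ^ 2 ≤ 2 * (1 - σ) * (1 - 2 * σ) * bellmanConst a σ := by
  have hσ0 : 0 ≤ σ := by nlinarith
  have hσ1 : 2 * σ ≤ 1 := by nlinarith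
  have : 2 * (1 - σ) * (1 - 2 * σ) * bellmanConst a σ =
      2 * (1 - σ) * (1 + 2 * σ + 16 * a ^ 2 * σ ^ 2) := by
    unfold bellmanConst
    linear_combination 2 * (1 - σ) * (1 + 2 * σ + 16 * a ^ 2 * σ ^ 2) * hσ
  rw [this]
  exact le_mul_of_one_le_left (by positivity) (by linarith)

lemma bellmanConst_nonneg (ha : 1 ≤ a) (hσ : a * (1 - 2 * σ) = 1) : 0 ≤ bellmanConst a σ := by
  have hσ0 : 0 ≤ σ := by nlinarith
  unfold bellmanConst; positivity

lemma inv_bellmanWeight_rpow_le (hσ : 0 ≤ σ) (hκ : κ ≠ 0) (z : ℝ × ℝ) :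
    (bellmanWeight a κ z ^ σ)⁻¹ ≤ (z.2 ^ 2 + κ ^ 2) ^ (-σ) := by
  rw [← rpow_neg (bellmanWeight_pos hκ z).le]
  refine rpow_le_rpow_of_nonpos (by positivity) ?_ (by linarith)
  have : 0 ≤ (z.1 ^ 2) ^ a := by positivity
  unfold bellmanWeight; linarith

lemma le_bellmanYY_main_term (ha : 1 ≤ a) (hσ : a * (1 - 2 * σ) = 1) (hκ : κ ≠ 0) (z : ℝ × ℝ) :
    (1 + 2 * σ + 16 * a ^ 2 * σ ^ 2) * (bellmanWeight a κ z ^ σ)⁻¹ ≤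
      2 * (1 - σ) * bellmanConst a σ * (z.2 ^ 2 + κ ^ 2) ^ (-σ) -
        4 * σ * (1 - σ) * bellmanConst a σ * z.2 ^ 2 * (z.2 ^ 2 + κ ^ 2) ^ (-σ - 1) := by
  have hρ := bellmanWeight_pos (a := a) hκ z
  have hA := bellmanConst_nonneg ha hσ
  have hσ0 : 0 ≤ σ := by nlinarith
  have hσ1 : 0 ≤ 1 - 2 * σ := by nlinarith
  have hσ2 : 0 ≤ 1 - σ := by linarith
  have hY : 0 < z.2 ^ 2 + κ ^ 2 := by positivity
  rw [rpow_sub_one hY.ne']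
  set Y := z.2 ^ 2 + κ ^ 2
  have hyY : z.2 ^ 2 / Y ≤ 1 := div_le_one_of_le₀ (by simp [Y, sq_nonneg]) hY.le
  calc (1 + 2 * σ + 16 * a ^ 2 * σ ^ 2) * (bellmanWeight a κ z ^ σ)⁻¹
      ≤ 2 * (1 - σ) * (1 - 2 * σ) * bellmanConst a σ * Y ^ (-σ) :=
        mul_le_mul (le_bellmanConst_mul ha hσ) (inv_bellmanWeight_rpow_le hσ0 hκ z)
          (by positivity) (by positivity)
    _ ≤ 2 * (1 - σ) * (1 - 2 * σ * (z.2 ^ 2 / Y)) * bellmanConst a σ * Y ^ (-σ) := by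
        gcongr 2 * (1 - σ) * (1 - ?_) * _ * _
        exact mul_le_of_le_one_right (by positivity) hyY
    _ = _ := by field_simp; ring

lemma le_bellmanYY_weight_term (ha : 1 ≤ a) (hσ : a * (1 - 2 * σ) = 1) (hκ : κ ≠ 0)
    (z : ℝ × ℝ) :
    -(2 * σ) * (bellmanWeight a κ z ^ σ)⁻¹ ≤
      2 * σ * z.1 ^ 2 * bellmanWeight a κ z ^ (σ - 1) +
        4 * σ * (σ - 1) * z.1 ^ 2 * z.2 ^ 2 * bellmanWeight a κ z ^ (σ - 2) := by
  have hρ := bellmanWeight_pos (a := a) hκ z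
  have hx := sub_nonneg.2 (sq_fst_mul_bellmanWeight_rpow_sq_le ha hσ hκ z)
  have hy := sub_nonneg.2 (sq_snd_le_bellmanWeight (a := a) (κ := κ) z)
  have hσ0 : 0 ≤ σ := by nlinarith
  rw [bellmanWeight_rpow_sub_one hκ, bellmanWeight_rpow_sub_two hκ]
  set ρ := bellmanWeight a κ z
  have : 0 < ρ ^ σ := by positivity
  have hdiff : 0 ≤ 2 * σ / (ρ ^ σ * ρ ^ 2) *
      (ρ * (ρ - z.1 ^ 2 * (ρ ^ σ) ^ 2) +
        2 * (z.1 ^ 2 * (ρ ^ σ) ^ 2) * (σ * z.2 ^ 2 + (ρ - z.2 ^ 2))) := by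
    positivity
  refine le_of_sub_nonneg (hdiff.trans_eq ?_)
  field_simp
  ring

lemma le_bellmanYY (ha : 1 ≤ a) (hσ : a * (1 - 2 * σ) = 1) (hκ : κ ≠ 0) (z : ℝ × ℝ) :
    (1 + 16 * a ^ 2 * σ ^ 2) * (bellmanWeight a κ z ^ σ)⁻¹ ≤ bellmanYY a σ κ z := by
  unfold bellmanYY
  linear_combination le_bellmanYY_main_term ha hσ hκ z + le_bellmanYY_weight_term ha hσ hκ z

lemma le_iteratedFDeriv_two_bellman (ha : 1 ≤ a) (hσ : a * (1 - 2 * σ) = 1) (hκ : κ ≠ 0)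
    (z v : ℝ × ℝ) :
    bellmanWeight a κ z ^ σ * v.1 ^ 2 + (bellmanWeight a κ z ^ σ)⁻¹ * v.2 ^ 2 ≤
      iteratedFDeriv ℝ 2 (bellman a σ κ) z fun _ ↦ v := by
  have hs : 0 < bellmanWeight a κ z ^ σ := rpow_pos_of_pos (bellmanWeight_pos hκ z) σ
  have : 0 ≤ σ := by nlinarith
  rw [iteratedFDeriv_two_bellman ha hκ]
  have hXX := mul_le_mul_of_nonneg_right (le_bellmanXX ha hσ hκ z) (sq_nonneg v.1)
  have hYY := mul_le_mul_of_nonneg_right (le_bellmanYY ha hσ hκ z) (sq_nonneg v.2)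
  have hXY : -(4 * a * σ * (|v.1| * |v.2|)) ≤ bellmanXY a σ κ z * (v.1 * v.2) := by
    rw [← abs_mul]
    refine neg_le_of_abs_le ?_
    rw [abs_mul]
    gcongr
    exact abs_bellmanXY_le ha hσ hκ z
  set s := bellmanWeight a κ z ^ σ
  have hcross : 8 * a * σ * (|v.1| * |v.2|) ≤
      s * v.1 ^ 2 + 16 * a ^ 2 * σ ^ 2 * s⁻¹ * v.2 ^ 2 := by
    have hsq : 0 ≤ s⁻¹ * (s * |v.1| - 4 * a * σ * |v.2|) ^ 2 := by positivity
    refine le_of_sub_nonneg (hsq.trans_eq ?_)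
    rw [← sq_abs v.1, ← sq_abs v.2]
    field_simp
    ring
  linear_combination hXX + hYY + 2 * hXY + hcross

lemma bellman_nonneg (ha : 1 ≤ a) (hσ : a * (1 - 2 * σ) = 1) (z : ℝ × ℝ) :
    0 ≤ bellman a σ κ z := by
  have hρ : 0 ≤ bellmanWeight a κ z := by unfold bellmanWeight; positivity
  have hY : (κ ^ 2) ^ (1 - σ) ≤ (z.2 ^ 2 + κ ^ 2) ^ (1 - σ) :=
    rpow_le_rpow (sq_nonneg κ) (by linarith [sq_nonneg z.2]) (by nlinarith)
  have := bellmanConst_nonneg ha hσ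
  have := sub_nonneg.2 hY
  unfold bellman
  positivity

lemma bellman_zero : bellman a σ κ 0 = 0 := by simp [bellman]

lemma sq_mul_sq_rpow_le (ha : 1 ≤ a) (hσ : a * (1 - 2 * σ) = 1) (x y : ℝ) :
    x ^ 2 * (y ^ 2) ^ σ ≤ |x| ^ (a + 1) + |y| ^ (2 - 2 * σ) := by
  have hσ0 : 0 ≤ σ := by nlinarith
  have hσ1 : 0 ≤ 1 - 2 * σ := by nlinarith
  have hσ2 : 0 < 1 - σ := by linarith
  have hw : (1 - 2 * σ) / (1 - σ) + σ / (1 - σ) = 1 := by field_simp; ring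
  have hx : x ^ 2 = (|x| ^ (a + 1)) ^ ((1 - 2 * σ) / (1 - σ)) := by
    rw [← rpow_mul (abs_nonneg x), ← sq_abs, ← rpow_natCast]
    congr 1
    field_simp
    push_cast
    linarith
  have hy : (y ^ 2) ^ σ = (|y| ^ (2 - 2 * σ)) ^ (σ / (1 - σ)) := by
    rw [← rpow_mul (abs_nonneg y), ← sq_abs, ← rpow_natCast, ← rpow_mul (abs_nonneg y)]
    congr 1
    field_simp
    push_cast
    ring
  have hX : 0 ≤ |x| ^ (a + 1) := by positivity
  have hY : 0 ≤ |y| ^ (2 - 2 * σ) := by positivity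
  have hw1 : (1 - 2 * σ) / (1 - σ) ≤ 1 := div_le_one_of_le₀ (by linarith) hσ2.le
  have hw2 : σ / (1 - σ) ≤ 1 := div_le_one_of_le₀ (by linarith) hσ2.le
  rw [hx, hy]
  exact (geom_mean_le_arith_mean2_weighted (by positivity) (by positivity) hX hY hw).trans
    (add_le_add (mul_le_of_le_one_left hX hw1) (mul_le_of_le_one_left hY hw2))

lemma bellman_le (ha : 1 ≤ a) (hσ : a * (1 - 2 * σ) = 1) (z : ℝ × ℝ) :
    bellman a σ κ z ≤ (bellmanConst a σ + 1) * |z.2| ^ (2 - 2 * σ) + 2 * |z.1| ^ (a + 1) +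
      (κ ^ 2) ^ σ * z.1 ^ 2 := by
  have hσ0 : 0 ≤ σ := by nlinarith
  have hσ1 : 2 * σ ≤ 1 := by nlinarith
  have hA := bellmanConst_nonneg ha hσ
  have hfirst : (z.2 ^ 2 + κ ^ 2) ^ (1 - σ) - (κ ^ 2) ^ (1 - σ) ≤ |z.2| ^ (2 - 2 * σ) := by
    have h := rpow_add_le_add_rpow (sq_nonneg z.2) (sq_nonneg κ)
      (by linarith : 0 ≤ 1 - σ) (by linarith)
    have hy : (z.2 ^ 2) ^ (1 - σ) = |z.2| ^ (2 - 2 * σ) := by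
      rw [← sq_abs, ← rpow_natCast, ← rpow_mul (abs_nonneg _)]
      push_cast
      ring_nf
    linarith
  have hρ : bellmanWeight a κ z ^ σ ≤ ((z.1 ^ 2) ^ a) ^ σ + (z.2 ^ 2) ^ σ + (κ ^ 2) ^ σ :=
    (rpow_add_le_add_rpow (by positivity) (sq_nonneg κ) hσ0 (by linarith)).trans
      (by gcongr; exact rpow_add_le_add_rpow (by positivity) (sq_nonneg _) hσ0 (by linarith))
  have hx : z.1 ^ 2 * ((z.1 ^ 2) ^ a) ^ σ = |z.1| ^ (a + 1) := by
    rw [← rpow_mul (sq_nonneg _), ← rpow_one_add' (sq_nonneg _) (by positivity), ← sq_abs,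
      ← rpow_natCast, ← rpow_mul (abs_nonneg _)]
    congr 1
    push_cast
    linear_combination -hσ
  calc bellman a σ κ z
      ≤ bellmanConst a σ * |z.2| ^ (2 - 2 * σ) +
          z.1 ^ 2 * (((z.1 ^ 2) ^ a) ^ σ + (z.2 ^ 2) ^ σ + (κ ^ 2) ^ σ) := by
        unfold bellman; gcongr
    _ ≤ _ := by linear_combination hx + sq_mul_sq_rpow_le ha hσ z.1 z.2

lemma two_mul_abs_mul_abs_le_sum_iteratedFDeriv_two_bellman {ι : Type*} [Fintype ι] (ha : 1 ≤ a)
    (hσ : a * (1 - 2 * σ) = 1) (hκ : κ ≠ 0) (z : ℝ × ℝ) (v : ι → ℝ × ℝ) (i j : ι) :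
    2 * (|(v i).1| * |(v j).2|) ≤ ∑ k, iteratedFDeriv ℝ 2 (bellman a σ κ) z fun _ ↦ v k := by
  have hs : 0 < bellmanWeight a κ z ^ σ := rpow_pos_of_pos (bellmanWeight_pos hκ z) σ
  set s := bellmanWeight a κ z ^ σ
  have hamgm : 2 * (|(v i).1| * |(v j).2|) ≤ s * (v i).1 ^ 2 + s⁻¹ * (v j).2 ^ 2 := by
    have hsq : 0 ≤ s⁻¹ * (s * |(v i).1| - |(v j).2|) ^ 2 := by positivity
    refine le_of_sub_nonneg (hsq.trans_eq ?_)
    rw [← sq_abs (v i).1, ← sq_abs (v j).2]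
    field_simp
    ring
  calc 2 * (|(v i).1| * |(v j).2|) ≤ s * (v i).1 ^ 2 + s⁻¹ * (v j).2 ^ 2 := hamgm
    _ ≤ ∑ k, s * (v k).1 ^ 2 + ∑ k, s⁻¹ * (v k).2 ^ 2 :=
        add_le_add
          (Finset.single_le_sum (f := fun k ↦ s * (v k).1 ^ 2) (fun k _ ↦ by positivity)
            (Finset.mem_univ i))
          (Finset.single_le_sum (f := fun k ↦ s⁻¹ * (v k).2 ^ 2) (fun k _ ↦ by positivity)
            (Finset.mem_univ j))
    _ = ∑ k, (s * (v k).1 ^ 2 + s⁻¹ * (v k).2 ^ 2) := Finset.sum_add_distrib.symm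
    _ ≤ _ := Finset.sum_le_sum fun k _ ↦ le_iteratedFDeriv_two_bellman ha hσ hκ z (v k)

/-- The real and imaginary part as a family of real-linear functionals. -/
noncomputable def reIm : Fin 2 → ℂ →L[ℝ] ℝ := ![Complex.reCLM, Complex.imCLM]

lemma abs_reIm_le (k : Fin 2) (ζ : ℂ) : |reIm k ζ| ≤ ‖ζ‖ := by
  fin_cases k
  · exact Complex.abs_re_le_norm ζ
  · exact Complex.abs_im_le_norm ζ

lemma norm_le_sum_abs_reIm (ζ : ℂ) : ‖ζ‖ ≤ ∑ k, |reIm k ζ| := by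
  simpa [reIm, Fin.sum_univ_two] using Complex.norm_le_abs_re_add_abs_im ζ

/-- The Bellman function for pairs of complex numbers: the sum of the real one over all choices of
a real or imaginary part in each argument. -/
noncomputable def complexBellman (a σ κ : ℝ) (w : ℂ × ℂ) : ℝ :=
  ∑ k, ∑ l, bellman a σ κ ((reIm k).prodMap (reIm l) w)

lemma contDiff_complexBellman (ha : 1 ≤ a) (hκ : κ ≠ 0) :
    ContDiff ℝ 2 (complexBellman a σ κ) :=
  ContDiff.sum fun k _ ↦ ContDiff.sum fun l _ ↦
    (contDiff_bellman ha hκ).comp ((reIm k).prodMap (reIm l)).contDiff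

lemma iteratedFDeriv_two_complexBellman (ha : 1 ≤ a) (hκ : κ ≠ 0) (w v : ℂ × ℂ) :
    (iteratedFDeriv ℝ 2 (complexBellman a σ κ) w fun _ ↦ v) =
      ∑ k, ∑ l, iteratedFDeriv ℝ 2 (bellman a σ κ) ((reIm k).prodMap (reIm l) w)
        fun _ ↦ (reIm k).prodMap (reIm l) v := by
  have hB (k l) : ContDiff ℝ 2 fun w : ℂ × ℂ ↦ bellman a σ κ ((reIm k).prodMap (reIm l) w) :=
    (contDiff_bellman ha hκ).comp ((reIm k).prodMap (reIm l)).contDiff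
  unfold complexBellman
  rw [iteratedFDeriv_fun_sum_apply fun k _ ↦ (ContDiff.sum fun l _ ↦ hB k l).contDiffAt,
    sum_apply]
  refine Finset.sum_congr rfl fun k _ ↦ ?_
  rw [iteratedFDeriv_fun_sum_apply fun l _ ↦ (hB k l).contDiffAt,
    sum_apply]
  refine Finset.sum_congr rfl fun l _ ↦ ?_
  exact DFunLike.congr_fun (((reIm k).prodMap (reIm l)).iteratedFDeriv_comp_right
    (contDiff_bellman ha hκ) w le_rfl) fun _ ↦ v

lemma two_mul_norm_mul_norm_le_sum_iteratedFDeriv_two_complexBellman {ι : Type*} [Fintype ι]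
    (ha : 1 ≤ a) (hσ : a * (1 - 2 * σ) = 1) (hκ : κ ≠ 0) (w : ℂ × ℂ) (v : ι → ℂ × ℂ) (i j : ι) :
    2 * (‖(v i).1‖ * ‖(v j).2‖) ≤
      ∑ m, iteratedFDeriv ℝ 2 (complexBellman a σ κ) w fun _ ↦ v m := by
  calc 2 * (‖(v i).1‖ * ‖(v j).2‖)
      ≤ 2 * ((∑ k, |reIm k (v i).1|) * ∑ l, |reIm l (v j).2|) := by
        gcongr <;> exact norm_le_sum_abs_reIm _
    _ = ∑ k, ∑ l, 2 * (|reIm k (v i).1| * |reIm l (v j).2|) := by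
        rw [Finset.sum_mul_sum, Finset.mul_sum]
        simp_rw [Finset.mul_sum]
    _ ≤ ∑ k, ∑ l, ∑ m, iteratedFDeriv ℝ 2 (bellman a σ κ) ((reIm k).prodMap (reIm l) w)
          fun _ ↦ (reIm k).prodMap (reIm l) (v m) :=
        Finset.sum_le_sum fun k _ ↦ Finset.sum_le_sum fun l _ ↦
          two_mul_abs_mul_abs_le_sum_iteratedFDeriv_two_bellman ha hσ hκ _
            (fun m ↦ (reIm k).prodMap (reIm l) (v m)) i j
    _ = ∑ m, iteratedFDeriv ℝ 2 (complexBellman a σ κ) w fun _ ↦ v m := by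
        simp_rw [iteratedFDeriv_two_complexBellman ha hκ]
        exact (Finset.sum_comm.trans (Finset.sum_congr rfl fun k _ ↦ Finset.sum_comm)).symm

lemma complexBellman_nonneg (ha : 1 ≤ a) (hσ : a * (1 - 2 * σ) = 1) (w : ℂ × ℂ) :
    0 ≤ complexBellman a σ κ w :=
  Finset.sum_nonneg fun _ _ ↦ Finset.sum_nonneg fun _ _ ↦ bellman_nonneg ha hσ _

lemma complexBellman_zero : complexBellman a σ κ 0 = 0 := by
  simp only [complexBellman, map_zero, bellman_zero, Finset.sum_const_zero]

lemma complexBellman_le (ha : 1 ≤ a) (hσ : a * (1 - 2 * σ) = 1) (w : ℂ × ℂ) :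
    complexBellman a σ κ w ≤ 4 * ((bellmanConst a σ + 1) * ‖w.2‖ ^ (2 - 2 * σ) +
      2 * ‖w.1‖ ^ (a + 1) + (κ ^ 2) ^ σ * ‖w.1‖ ^ 2) := by
  have hσ1 : 0 ≤ 2 - 2 * σ := by nlinarith
  have hA := bellmanConst_nonneg ha hσ
  have hterm (k l : Fin 2) : bellman a σ κ ((reIm k).prodMap (reIm l) w) ≤
      (bellmanConst a σ + 1) * ‖w.2‖ ^ (2 - 2 * σ) + 2 * ‖w.1‖ ^ (a + 1) +
        (κ ^ 2) ^ σ * ‖w.1‖ ^ 2 := by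
    refine (bellman_le ha hσ _).trans ?_
    rw [← sq_abs (Prod.fst _)]
    have h1 := abs_reIm_le k w.1
    have h2 := abs_reIm_le l w.2
    simp only [ContinuousLinearMap.coe_prodMap', Prod.map_fst, Prod.map_snd]
    gcongr
  refine (Finset.sum_le_sum fun k _ ↦ Finset.sum_le_sum fun l _ ↦ hterm k l).trans_eq ?_
  simp
  ring

end Bellman

/-! ### Monotonicity of convex functionals along the heat flow -/

section Caloric

lemma integrable_prod_of_integral_norm_le {α β E : Type*} [MeasurableSpace α] [MeasurableSpace β]
    [NormedAddCommGroup E] {ν : Measure α} [IsFiniteMeasure ν] {μ : Measure β} [SFinite μ]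
    {f : α × β → E} {M : ℝ} (hf : AEStronglyMeasurable f (ν.prod μ))
    (hint : ∀ t, Integrable (fun x ↦ f (t, x)) μ) (hM : ∀ t, ∫ x, ‖f (t, x)‖ ∂μ ≤ M) :
    Integrable f (ν.prod μ) := by
  refine (integrable_prod_iff hf).2 ⟨.of_forall hint,
    (integrable_const M).mono' hf.norm.integral_prod_right' (.of_forall fun t ↦ ?_)⟩
  rw [norm_of_nonneg (integral_nonneg fun x ↦ norm_nonneg _)]
  exact hM t

lemma integral_hasLineDerivAt_eq_zero {V : Type*} [NormedAddCommGroup V] [NormedSpace ℝ V]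
    [FiniteDimensional ℝ V] [MeasurableSpace V] [BorelSpace V]
    {μ : Measure V} [μ.IsAddHaarMeasure] {f f' : V → ℝ} {v : V}
    (hf : Integrable f μ) (hf' : Integrable f' μ)
    (h : ∀ x, HasLineDerivAt ℝ f (f' x) x v) : ∫ x, f' x ∂μ = 0 := by
  simpa using integral_bilinear_hasLineDerivAt_right_eq_neg_left_of_integrable
    (f := fun _ : V ↦ (1 : ℝ)) (f' := 0) (B := ContinuousLinearMap.mul ℝ ℝ)
    (by simp) (by simpa using hf') (by simpa using hf)
    (fun x _ ↦ by simpa [HasLineDerivAt] using hasDerivAt_const (0 : ℝ) (1 : ℝ)) (fun x _ ↦ h x)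

variable {V W ι : Type*} [NormedAddCommGroup W] [Fintype ι]

/-- The pointwise sum of the squared norms of a flow and of its first and second derivatives. -/
def flowEnergy (w : ℝ → V → W) (w₁ w₂ : ι → ℝ → V → W) (t : ℝ) (x : V) : ℝ :=
  ‖w t x‖ ^ 2 + ∑ k, ‖w₁ k t x‖ ^ 2 + ∑ k, ‖w₂ k t x‖ ^ 2

lemma flowEnergy_nonneg (w : ℝ → V → W) (w₁ w₂ : ι → ℝ → V → W) (t : ℝ) (x : V) :
    0 ≤ flowEnergy w w₁ w₂ t x := by
  unfold flowEnergy; positivity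

lemma flowEnergy_prodMk_le {W' : Type*} [NormedAddCommGroup W'] (w : ℝ → V → W) (w' : ℝ → V → W')
    (w₁ w₂ : ι → ℝ → V → W) (w₁' w₂' : ι → ℝ → V → W') (t : ℝ) (x : V) :
    flowEnergy (fun t x ↦ (w t x, w' t x)) (fun k t x ↦ (w₁ k t x, w₁' k t x))
      (fun k t x ↦ (w₂ k t x, w₂' k t x)) t x ≤
      flowEnergy w w₁ w₂ t x + flowEnergy w' w₁' w₂' t x := by
  have hsq (y : W) (y' : W') : ‖(y, y')‖ ^ 2 ≤ ‖y‖ ^ 2 + ‖y'‖ ^ 2 := by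
    rcases max_cases ‖y‖ ‖y'‖ with ⟨hmax, -⟩ | ⟨hmax, -⟩ <;> simp [Prod.norm_mk, hmax]
  have hsum (c : ι → ℝ → V → W) (c' : ι → ℝ → V → W') :
      ∑ k, ‖(c k t x, c' k t x)‖ ^ 2 ≤ ∑ k, ‖c k t x‖ ^ 2 + ∑ k, ‖c' k t x‖ ^ 2 := by
    rw [← Finset.sum_add_distrib]
    exact Finset.sum_le_sum fun k _ ↦ hsq _ _
  unfold flowEnergy
  linarith [hsq (w t x) (w' t x), hsum w₁ w₁', hsum w₂ w₂']

variable [NormedAddCommGroup V]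

lemma continuous_flowEnergy {w : ℝ → V → W} {w₁ w₂ : ι → ℝ → V → W}
    (hw : Continuous fun p : ℝ × V ↦ w p.1 p.2) (hw₁ : ∀ k, Continuous fun p : ℝ × V ↦ w₁ k p.1 p.2)
    (hw₂ : ∀ k, Continuous fun p : ℝ × V ↦ w₂ k p.1 p.2) :
    Continuous fun p : ℝ × V ↦ flowEnergy w w₁ w₂ p.1 p.2 := by
  unfold flowEnergy; fun_prop

variable [NormedSpace ℝ V] [NormedSpace ℝ W]

/-- `w` is a bounded solution of the heat equation `∂w/∂t = ∑ k, ∂²w/∂(b k)²` on `t > 0`, with first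
and second derivatives `w₁ k` and `w₂ k` in the direction `b k`, and with square integrals bounded
uniformly in time. For convenience a solution is a function of all `t : ℝ`, although the equation is
required for `t > 0` only. -/
structure IsCaloric [MeasurableSpace V] (μ : Measure V) (b : ι → V) (w : ℝ → V → W)
    (w₁ w₂ : ι → ℝ → V → W) : Prop where
  continuous : Continuous fun p : ℝ × V ↦ w p.1 p.2
  continuous_fst : ∀ k, Continuous fun p : ℝ × V ↦ w₁ k p.1 p.2
  continuous_snd : ∀ k, Continuous fun p : ℝ × V ↦ w₂ k p.1 p.2
  bounded : ∃ M, ∀ t x, ‖w t x‖ ≤ M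
  integrable_energy : ∀ t, Integrable (flowEnergy w w₁ w₂ t) μ
  integral_energy_le : ∃ M, ∀ t, ∫ x, flowEnergy w w₁ w₂ t x ∂μ ≤ M
  hasLineDerivAt : ∀ k t x, HasLineDerivAt ℝ (w t) (w₁ k t x) x (b k)
  hasLineDerivAt_fst : ∀ k t x, HasLineDerivAt ℝ (w₁ k t) (w₂ k t x) x (b k)
  hasDerivAt : ∀ t > 0, ∀ x, HasDerivAt (fun s ↦ w s x) (∑ k, w₂ k t x) t

/-- The rate at which the integral of `B ∘ w` decreases along a solution `w` of the heat equation
with spatial derivatives `w₁`: the Hessian of `B` evaluated on the gradient of `w`. -/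
noncomputable def dissipation (B : W → ℝ) (w : ℝ → V → W) (w₁ : ι → ℝ → V → W) (p : ℝ × V) : ℝ :=
  ∑ k, iteratedFDeriv ℝ 2 B (w p.1 p.2) fun _ ↦ w₁ k p.1 p.2

lemma norm_le_mul_norm_of_norm_fderiv_le {E : Type*} [NormedAddCommGroup E] [NormedSpace ℝ E]
    {G : W → E} (hG : Differentiable ℝ G) (hG0 : G 0 = 0) {K : ℝ} {z : W}
    (hK : ∀ y, ‖y‖ ≤ ‖z‖ → ‖fderiv ℝ G y‖ ≤ K) : ‖G z‖ ≤ K * ‖z‖ := by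
  simpa [hG0] using (convex_closedBall (0 : W) ‖z‖).norm_image_sub_le_of_norm_fderiv_le
    (fun y _ ↦ hG y) (fun y hy ↦ hK y (mem_closedBall_zero_iff.1 hy))
    (by simp : (0 : W) ∈ _) (by simp : z ∈ _)

lemma exists_norm_fderiv_le [ProperSpace W] {E : Type*} [NormedAddCommGroup E] [NormedSpace ℝ E]
    {G : W → E} (hG : ContDiff ℝ 1 G) (M : ℝ) :
    ∃ K, 0 ≤ K ∧ ∀ z, ‖z‖ ≤ M → ‖fderiv ℝ G z‖ ≤ K := by
  obtain ⟨K, hK⟩ := (isCompact_closedBall (0 : W) M).exists_bound_of_continuousOn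
    (hG.continuous_fderiv one_ne_zero).continuousOn
  exact ⟨max K 0, le_max_right _ _, fun z hz ↦
    (hK z (mem_closedBall_zero_iff.2 hz)).trans (le_max_left _ _)⟩

lemma exists_quadratic_bound [ProperSpace W] {B : W → ℝ} (hB : ContDiff ℝ 2 B)
    (hB₀ : ∀ z, 0 ≤ B z) (hB0 : B 0 = 0) (M : ℝ) :
    ∃ K, 0 ≤ K ∧ ∀ z, ‖z‖ ≤ M → ‖B z‖ ≤ K * ‖z‖ ^ 2 ∧ ‖fderiv ℝ B z‖ ≤ K * ‖z‖ ∧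
      ∀ v, ‖iteratedFDeriv ℝ 2 B z fun _ ↦ v‖ ≤ K * ‖v‖ ^ 2 := by
  have hB' : ContDiff ℝ 1 (fderiv ℝ B) := hB.fderiv_right (m := 1) (by norm_num)
  obtain ⟨K, hK₀, hK⟩ := exists_norm_fderiv_le hB' M
  have hgrad_zero : fderiv ℝ B 0 = 0 :=
    IsLocalMin.fderiv_eq_zero (.of_forall fun z ↦ hB0.trans_le (hB₀ z))
  have hgrad {z : W} (hz : ‖z‖ ≤ M) : ‖fderiv ℝ B z‖ ≤ K * ‖z‖ :=
    norm_le_mul_norm_of_norm_fderiv_le (hB'.differentiable one_ne_zero) hgrad_zero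
      fun y hy ↦ hK y (hy.trans hz)
  refine ⟨K, hK₀, fun z hz ↦ ⟨?_, hgrad hz, fun v ↦ ?_⟩⟩
  · rw [pow_two, ← mul_assoc]
    exact norm_le_mul_norm_of_norm_fderiv_le (hB.differentiable two_ne_zero) hB0
      fun y hy ↦ (hgrad (hy.trans hz)).trans (by gcongr)
  · rw [iteratedFDeriv_two_apply, pow_two, ← mul_assoc]
    exact ContinuousLinearMap.le_of_opNorm₂_le_of_le _ (hK z hz) le_rfl le_rfl

namespace IsCaloric

variable [MeasurableSpace V] {μ : Measure V} {b : ι → V} {w : ℝ → V → W} {w₁ w₂ : ι → ℝ → V → W}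

lemma continuous_hessian (h : IsCaloric μ b w w₁ w₂) {B : W → ℝ} (hB : ContDiff ℝ 2 B) (k : ι) :
    Continuous fun p : ℝ × V ↦ iteratedFDeriv ℝ 2 B (w p.1 p.2) fun _ ↦ w₁ k p.1 p.2 := by
  have hw₁ := h.continuous_fst k
  exact ((hB.continuous_iteratedFDeriv le_rfl).comp h.continuous).eval (by fun_prop)

lemma continuous_fderiv_apply_snd (h : IsCaloric μ b w w₁ w₂) {B : W → ℝ} (hB : ContDiff ℝ 2 B)
    (k : ι) : Continuous fun p : ℝ × V ↦ fderiv ℝ B (w p.1 p.2) (w₂ k p.1 p.2) :=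
  ((hB.continuous_fderiv two_ne_zero).comp h.continuous).clm_apply (h.continuous_snd k)

lemma exists_norm_le_energy [ProperSpace W] (h : IsCaloric μ b w w₁ w₂) {B : W → ℝ}
    (hB : ContDiff ℝ 2 B) (hB₀ : ∀ z, 0 ≤ B z) (hB0 : B 0 = 0) :
    ∃ K, ∀ t x, ‖B (w t x)‖ ≤ K * flowEnergy w w₁ w₂ t x ∧
      ∀ k, ‖fderiv ℝ B (w t x) (w₁ k t x)‖ ≤ K * flowEnergy w w₁ w₂ t x ∧
        ‖fderiv ℝ B (w t x) (w₂ k t x)‖ ≤ K * flowEnergy w w₁ w₂ t x ∧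
        ‖iteratedFDeriv ℝ 2 B (w t x) fun _ ↦ w₁ k t x‖ ≤ K * flowEnergy w w₁ w₂ t x := by
  obtain ⟨M, hM⟩ := h.bounded
  obtain ⟨K, hK₀, hK⟩ := exists_quadratic_bound hB hB₀ hB0 M
  refine ⟨K, fun t x ↦ ?_⟩
  obtain ⟨hval, hgrad, hhess⟩ := hK _ (hM t x)
  have hsum (c : ι → ℝ → V → W) (k : ι) : ‖c k t x‖ ^ 2 ≤ ∑ l, ‖c l t x‖ ^ 2 :=
    Finset.single_le_sum (f := fun l ↦ ‖c l t x‖ ^ 2) (fun l _ ↦ by positivity) (Finset.mem_univ k)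
  have hsum_nonneg (c : ι → ℝ → V → W) : 0 ≤ ∑ l, ‖c l t x‖ ^ 2 := by positivity
  have hpair {y : W} (hy : ‖w t x‖ ^ 2 + ‖y‖ ^ 2 ≤ flowEnergy w w₁ w₂ t x) :
      ‖fderiv ℝ B (w t x) y‖ ≤ K * flowEnergy w w₁ w₂ t x :=
    calc ‖fderiv ℝ B (w t x) y‖ ≤ K * ‖w t x‖ * ‖y‖ := ContinuousLinearMap.le_of_opNorm_le _ hgrad y
      _ = K * (‖w t x‖ * ‖y‖) := mul_assoc _ _ _
      _ ≤ K * flowEnergy w w₁ w₂ t x := by gcongr; nlinarith [sq_nonneg (‖w t x‖ - ‖y‖)]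
  unfold flowEnergy at hpair ⊢
  refine ⟨hval.trans ?_, fun k ↦ ⟨hpair ?_, hpair ?_, (hhess _).trans ?_⟩⟩
  · gcongr
    linarith [hsum_nonneg w₁, hsum_nonneg w₂]
  · linarith [hsum w₁ k, hsum_nonneg w₂]
  · linarith [hsum w₂ k, hsum_nonneg w₁]
  · gcongr
    linarith [hsum w₁ k, hsum_nonneg w₂, sq_nonneg ‖w t x‖]

lemma integral_fderiv_comp (h : IsCaloric μ b w w₁ w₂) {B : W → ℝ}
    (hB : ContDiff ℝ 2 B) {T : ℝ} (hT : 0 ≤ T) (x : V) :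
    ∫ t in Set.Ioc 0 T, fderiv ℝ B (w t x) (∑ k, w₂ k t x) = B (w T x) - B (w 0 x) := by
  have hslice : Continuous fun t : ℝ ↦ (t, x) := by fun_prop
  rw [← intervalIntegral.integral_of_le hT]
  refine intervalIntegral.integral_eq_sub_of_hasDerivAt_of_le hT
    (hB.continuous.comp (h.continuous.comp hslice)).continuousOn (fun t ht ↦ ?_) ?_
  · exact ((hB.differentiable two_ne_zero) _).hasFDerivAt.comp_hasDerivAt t (h.hasDerivAt t ht.1 x)
  · simp only [map_sum]
    exact (continuous_finsetSum _ fun k _ ↦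
      (h.continuous_fderiv_apply_snd hB k).comp hslice).intervalIntegrable _ _

variable [BorelSpace V]

lemma prodMk {W' : Type*} [NormedAddCommGroup W'] [NormedSpace ℝ W'] {w' : ℝ → V → W'}
    {w₁' w₂' : ι → ℝ → V → W'} (h : IsCaloric μ b w w₁ w₂) (h' : IsCaloric μ b w' w₁' w₂') :
    IsCaloric μ b (fun t x ↦ (w t x, w' t x)) (fun k t x ↦ (w₁ k t x, w₁' k t x))
      (fun k t x ↦ (w₂ k t x, w₂' k t x)) := by
  obtain ⟨M, hM⟩ := h.bounded
  obtain ⟨M', hM'⟩ := h'.bounded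
  obtain ⟨L, hL⟩ := h.integral_energy_le
  obtain ⟨L', hL'⟩ := h'.integral_energy_le
  have hcont := h.continuous.prodMk h'.continuous
  have hcont_fst k := (h.continuous_fst k).prodMk (h'.continuous_fst k)
  have hcont_snd k := (h.continuous_snd k).prodMk (h'.continuous_snd k)
  have hint t := (h.integrable_energy t).add (h'.integrable_energy t)
  have hcont_energy (t : ℝ) := (continuous_flowEnergy (w := fun t x ↦ (w t x, w' t x))
    (w₁ := fun k t x ↦ (w₁ k t x, w₁' k t x)) (w₂ := fun k t x ↦ (w₂ k t x, w₂' k t x))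
    hcont hcont_fst hcont_snd).comp (Continuous.prodMk_right t)
  have hint' (t : ℝ) := (hint t).mono' (hcont_energy t).aestronglyMeasurable (.of_forall fun x ↦
    (norm_of_nonneg (flowEnergy_nonneg _ _ _ t x)).trans_le (flowEnergy_prodMk_le ..))
  exact
    { continuous := hcont
      continuous_fst := hcont_fst
      continuous_snd := hcont_snd
      bounded := ⟨max M M', fun t x ↦ max_le_max (hM t x) (hM' t x)⟩
      integrable_energy := hint'
      integral_energy_le := ⟨L + L', fun t ↦
        (integral_mono (hint' t) (hint t) fun x ↦ flowEnergy_prodMk_le ..).trans <|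
          (integral_add (h.integrable_energy t) (h'.integrable_energy t)).trans_le
            (add_le_add (hL t) (hL' t))⟩
      hasLineDerivAt := fun k t x ↦ (h.hasLineDerivAt k t x).prodMk (h'.hasLineDerivAt k t x)
      hasLineDerivAt_fst := fun k t x ↦
        (h.hasLineDerivAt_fst k t x).prodMk (h'.hasLineDerivAt_fst k t x)
      hasDerivAt := fun t ht x ↦ by
        simpa only [prod_mk_sum] using (h.hasDerivAt t ht x).prodMk (h'.hasDerivAt t ht x) }

lemma integrable_of_norm_le_energy (h : IsCaloric μ b w w₁ w₂) {f : ℝ × V → ℝ} (hf : Continuous f)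
    {K : ℝ} (hK : ∀ t x, ‖f (t, x)‖ ≤ K * flowEnergy w w₁ w₂ t x) (t : ℝ) :
    Integrable (fun x ↦ f (t, x)) μ :=
  ((h.integrable_energy t).const_mul K).mono'
    (hf.comp (Continuous.prodMk_right t)).aestronglyMeasurable (.of_forall (hK t))

variable [FiniteDimensional ℝ V] [μ.IsAddHaarMeasure]

lemma integrable_prod_of_norm_le_energy (h : IsCaloric μ b w w₁ w₂) {f : ℝ × V → ℝ}
    (hf : Continuous f) {K : ℝ} (hK : ∀ t x, ‖f (t, x)‖ ≤ K * flowEnergy w w₁ w₂ t x)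
    (ν : Measure ℝ) [IsFiniteMeasure ν] : Integrable f (ν.prod μ) := by
  obtain ⟨M, hM⟩ := h.integral_energy_le
  have hcont := continuous_flowEnergy h.continuous h.continuous_fst h.continuous_snd
  have hint : Integrable (fun p : ℝ × V ↦ flowEnergy w w₁ w₂ p.1 p.2) (ν.prod μ) :=
    integrable_prod_of_integral_norm_le hcont.aestronglyMeasurable h.integrable_energy fun t ↦
      (integral_congr_ae (.of_forall fun x ↦
        norm_of_nonneg (flowEnergy_nonneg w w₁ w₂ t x))).trans_le (hM t)
  exact (hint.const_mul K).mono' hf.aestronglyMeasurable (.of_forall fun p ↦ hK p.1 p.2)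

variable [ProperSpace W] {B : W → ℝ}

lemma integrable_dissipation_prod (h : IsCaloric μ b w w₁ w₂) (hB : ContDiff ℝ 2 B)
    (hB₀ : ∀ z, 0 ≤ B z) (hB0 : B 0 = 0) (ν : Measure ℝ) [IsFiniteMeasure ν] :
    Integrable (dissipation B w w₁) (ν.prod μ) := by
  obtain ⟨K, hK⟩ := h.exists_norm_le_energy hB hB₀ hB0
  exact integrable_finsetSum _ fun k _ ↦ h.integrable_prod_of_norm_le_energy
    (h.continuous_hessian hB k) (fun t x ↦ ((hK t x).2 k).2.2) ν

lemma integral_dissipation (h : IsCaloric μ b w w₁ w₂) (hB : ContDiff ℝ 2 B)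
    (hB₀ : ∀ z, 0 ≤ B z) (hB0 : B 0 = 0) (t : ℝ) :
    ∫ x, dissipation B w w₁ (t, x) ∂μ = -∫ x, fderiv ℝ B (w t x) (∑ k, w₂ k t x) ∂μ := by
  obtain ⟨K, hK⟩ := h.exists_norm_le_energy hB hB₀ hB0
  have hhess k := h.integrable_of_norm_le_energy (h.continuous_hessian hB k)
    (fun t x ↦ ((hK t x).2 k).2.2) t
  have hsnd k := h.integrable_of_norm_le_energy (h.continuous_fderiv_apply_snd hB k)
    (fun t x ↦ ((hK t x).2 k).2.1) t
  have hfst k := h.integrable_of_norm_le_energy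
    (((hB.continuous_fderiv two_ne_zero).comp h.continuous).clm_apply (h.continuous_fst k))
    (fun t x ↦ ((hK t x).2 k).1) t
  have hderiv (k : ι) (x : V) : HasLineDerivAt ℝ (fun x ↦ fderiv ℝ B (w t x) (w₁ k t x))
      ((iteratedFDeriv ℝ 2 B (w t x) fun _ ↦ w₁ k t x) +
        fderiv ℝ B (w t x) (w₂ k t x)) x (b k) := by
    have hB' : Differentiable ℝ (fderiv ℝ B) :=
      (hB.fderiv_right (m := 1) (by norm_num)).differentiable one_ne_zero
    have hw : HasDerivAt (fun s : ℝ ↦ w t (x + s • b k)) (w₁ k t x) 0 := h.hasLineDerivAt k t x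
    have hw₁ : HasDerivAt (fun s : ℝ ↦ w₁ k t (x + s • b k)) (w₂ k t x) 0 :=
      h.hasLineDerivAt_fst k t x
    have hgrad := (hB' (w t (x + (0 : ℝ) • b k))).hasFDerivAt.comp_hasDerivAt (0 : ℝ) hw
    simpa [HasLineDerivAt, iteratedFDeriv_two_apply, Function.comp_def] using hgrad.clm_apply hw₁
  have hzero k : (∫ x, iteratedFDeriv ℝ 2 B (w t x) fun _ ↦ w₁ k t x ∂μ) +
      ∫ x, fderiv ℝ B (w t x) (w₂ k t x) ∂μ = 0 := by
    rw [← integral_add (hhess k) (hsnd k)]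
    exact integral_hasLineDerivAt_eq_zero (hfst k) ((hhess k).add (hsnd k)) (hderiv k)
  simp only [dissipation, map_sum]
  rw [integral_finsetSum _ fun k _ ↦ hhess k, integral_finsetSum _ fun k _ ↦ hsnd k,
    ← Finset.sum_neg_distrib]
  exact Finset.sum_congr rfl fun k _ ↦ eq_neg_of_add_eq_zero_left (hzero k)

lemma integral_dissipation_prod_le (h : IsCaloric μ b w w₁ w₂) (hB : ContDiff ℝ 2 B)
    (hB₀ : ∀ z, 0 ≤ B z) (hB0 : B 0 = 0) {T : ℝ} (hT : 0 ≤ T) :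
    ∫ p, dissipation B w w₁ p ∂(volume.restrict (Set.Ioc 0 T)).prod μ ≤ ∫ x, B (w 0 x) ∂μ := by
  obtain ⟨K, hK⟩ := h.exists_norm_le_energy hB hB₀ hB0
  have hB_int (t : ℝ) : Integrable (fun x ↦ B (w t x)) μ :=
    h.integrable_of_norm_le_energy (hB.continuous.comp h.continuous) (fun t x ↦ (hK t x).1) t
  have hdB_int : Integrable (fun p : ℝ × V ↦ fderiv ℝ B (w p.1 p.2) (∑ k, w₂ k p.1 p.2))
      ((volume.restrict (Set.Ioc 0 T)).prod μ) := by
    simp only [map_sum]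
    exact integrable_finsetSum _ fun k _ ↦ h.integrable_prod_of_norm_le_energy
      (h.continuous_fderiv_apply_snd hB k) (fun t x ↦ ((hK t x).2 k).2.1) _
  calc ∫ p, dissipation B w w₁ p ∂(volume.restrict (Set.Ioc 0 T)).prod μ
      = ∫ t in Set.Ioc 0 T, -∫ x, fderiv ℝ B (w t x) (∑ k, w₂ k t x) ∂μ := by
        rw [integral_prod _ (h.integrable_dissipation_prod hB hB₀ hB0 _)]
        simp_rw [h.integral_dissipation hB hB₀ hB0]
    _ = -∫ x, (∫ t in Set.Ioc 0 T, fderiv ℝ B (w t x) (∑ k, w₂ k t x)) ∂μ := by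
        rw [integral_neg, integral_integral_swap hdB_int]
    _ = ∫ x, B (w 0 x) ∂μ - ∫ x, B (w T x) ∂μ := by
        simp_rw [h.integral_fderiv_comp hB hT]
        rw [integral_sub (hB_int T) (hB_int 0), neg_sub]
    _ ≤ ∫ x, B (w 0 x) ∂μ := sub_le_self _ (integral_nonneg fun x ↦ hB₀ _)

end IsCaloric

end Caloric

/-! ### The heat semigroup on Schwartz functions -/

section Heat

variable {V : Type*} [NormedAddCommGroup V]

/-- The Fourier symbol `exp (-4π²t‖η‖²)` of the heat operator `exp (tΔ)`. For `t < 0` it takes the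
value `1`, so that heat flows are constant up to time `0`. -/
noncomputable def heatSymbol (t : ℝ) (η : V) : ℝ := Real.exp (-(4 * π ^ 2 * max t 0 * ‖η‖ ^ 2))

lemma heatSymbol_pos (t : ℝ) (η : V) : 0 < heatSymbol t η := Real.exp_pos _

lemma heatSymbol_le_one (t : ℝ) (η : V) : heatSymbol t η ≤ 1 :=
  Real.exp_le_one_iff.2 (neg_nonpos.2 (by positivity))

@[simp] lemma heatSymbol_zero : heatSymbol (0 : ℝ) = fun _ : V ↦ 1 := by
  ext; simp [heatSymbol]

lemma norm_heatSymbol_smul_le (t : ℝ) (η : V) (z : ℂ) : ‖heatSymbol t η • z‖ ≤ ‖z‖ := by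
  rw [norm_smul, norm_of_nonneg (heatSymbol_pos t η).le]
  exact mul_le_of_le_one_left (norm_nonneg z) (heatSymbol_le_one t η)

@[fun_prop]
lemma continuous_heatSymbol : Continuous fun p : ℝ × V ↦ heatSymbol p.1 p.2 := by
  unfold heatSymbol; fun_prop

lemma hasDerivAt_heatSymbol {t : ℝ} (ht : 0 < t) (η : V) :
    HasDerivAt (fun s ↦ heatSymbol s η) (-(4 * π ^ 2 * ‖η‖ ^ 2) * heatSymbol t η) t := by
  have hexp : HasDerivAt (fun s : ℝ ↦ Real.exp (-(4 * π ^ 2 * s * ‖η‖ ^ 2)))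
      (Real.exp (-(4 * π ^ 2 * t * ‖η‖ ^ 2)) * -(4 * π ^ 2 * 1 * ‖η‖ ^ 2)) t :=
    (((hasDerivAt_id t).const_mul (4 * π ^ 2)).mul_const (‖η‖ ^ 2)).neg.exp
  refine (hexp.congr_of_eventuallyEq ?_).congr_deriv ?_
  · filter_upwards [lt_mem_nhds ht] with s hs
    rw [heatSymbol, max_eq_left hs.le]
  · rw [heatSymbol, max_eq_left ht.le]
    ring

lemma tendsto_heatSymbol_atTop {η : V} (hη : η ≠ 0) :
    Tendsto (fun t ↦ heatSymbol t η) atTop (𝓝 0) := by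
  have hpos : 0 < 4 * π ^ 2 * ‖η‖ ^ 2 := by positivity
  refine Real.tendsto_exp_neg_atTop_nhds_zero.comp
    ((tendsto_id.const_mul_atTop hpos).congr' ?_)
  filter_upwards [eventually_ge_atTop 0] with t ht
  rw [max_eq_left ht, id]
  ring

lemma heatSymbol_neg (t : ℝ) (η : V) : heatSymbol t (-η) = heatSymbol t η := by
  rw [heatSymbol, heatSymbol, norm_neg]

lemma heatSymbol_mul_self (t : ℝ) (η : V) :
    heatSymbol t η * heatSymbol t η = heatSymbol (2 * t) η := by
  have hmax : max (2 * t) 0 = 2 * max t 0 := by rw [mul_max_of_nonneg _ _ zero_le_two, mul_zero]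
  rw [heatSymbol, heatSymbol, ← Real.exp_add, hmax]
  ring_nf

variable [InnerProductSpace ℝ V]

@[fun_prop]
lemma hasTemperateGrowth_heatSymbol (t : ℝ) :
    Function.HasTemperateGrowth (heatSymbol t : V → ℝ) := by
  refine Function.HasTemperateGrowth.comp' (t := Set.Iio 1) ?_ isOpen_Iio.uniqueDiffOn
    Real.contDiff_exp.contDiffOn (fun n ↦ ⟨0, Real.exp 1, (Real.exp_pos 1).le, fun m _ x hx ↦ ?_⟩)
    (f := fun η : V ↦ -(4 * π ^ 2 * max t 0 * ‖η‖ ^ 2)) (by fun_prop)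
  · rintro _ ⟨η, rfl⟩
    have : 0 ≤ 4 * π ^ 2 * max t 0 * ‖η‖ ^ 2 := by positivity
    exact (neg_nonpos.2 this).trans_lt one_pos
  · rw [norm_iteratedFDerivWithin_eq_norm_iteratedDerivWithin,
      iteratedDerivWithin_eq_iteratedDeriv isOpen_Iio.uniqueDiffOn
        Real.contDiff_exp.contDiffAt hx, iteratedDeriv_eq_iterate, Real.iter_deriv_exp,
      norm_of_nonneg (Real.exp_pos x).le, pow_zero, mul_one]
    exact Real.exp_le_exp.2 (Set.mem_Iio.1 hx).le

variable [FiniteDimensional ℝ V] [MeasurableSpace V] [BorelSpace V]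

lemma hasDerivAt_integral_heatSymbol_smul {Φ : V → ℂ} (hΦ : Integrable Φ)
    (hΦ₂ : Integrable fun η ↦ -(4 * π ^ 2 * ‖η‖ ^ 2) • Φ η) {t : ℝ} (ht : 0 < t) :
    HasDerivAt (fun s ↦ ∫ η, heatSymbol s η • Φ η)
      (∫ η, heatSymbol t η • -(4 * π ^ 2 * ‖η‖ ^ 2) • Φ η) t := by
  have hmeas {Ψ : V → ℂ} (hΨ : Integrable Ψ) (s : ℝ) :
      AEStronglyMeasurable fun η ↦ heatSymbol s η • Ψ η :=
    (continuous_heatSymbol.comp (Continuous.prodMk_right s)).aestronglyMeasurable.smul hΨ.1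
  refine (hasDerivAt_integral_of_dominated_loc_of_deriv_le (Ioi_mem_nhds ht)
    (F' := fun s η ↦ heatSymbol s η • -(4 * π ^ 2 * ‖η‖ ^ 2) • Φ η) (.of_forall (hmeas hΦ))
    (hΦ.norm.mono' (hmeas hΦ t) (.of_forall fun η ↦ norm_heatSymbol_smul_le t η _)) (hmeas hΦ₂ t)
    (.of_forall fun η s _ ↦ norm_heatSymbol_smul_le s η _) hΦ₂.norm
    (.of_forall fun η s hs ↦ ?_)).2
  exact ((hasDerivAt_heatSymbol hs η).smul_const (Φ η)).congr_deriv (by rw [smul_smul, mul_comm])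

lemma tendsto_integral_heatSymbol_smul {Φ : V → ℂ} (hΦ : Integrable Φ) (hΦ0 : Φ 0 = 0) :
    Tendsto (fun t ↦ ∫ η, heatSymbol t η • Φ η) atTop (𝓝 0) := by
  have hlim := tendsto_integral_filter_of_dominated_convergence (f := fun _ ↦ (0 : ℂ))
    (μ := (volume : Measure V)) (l := atTop) (F := fun t η ↦ heatSymbol t η • Φ η) _
    (.of_forall fun t ↦
      (continuous_heatSymbol.comp (Continuous.prodMk_right t)).aestronglyMeasurable.smul hΦ.1)
    (.of_forall fun t ↦ .of_forall fun η ↦ norm_heatSymbol_smul_le t η (Φ η)) hΦ.norm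
    (.of_forall fun η ↦ ?_)
  · simpa using hlim
  · rcases eq_or_ne η 0 with rfl | hη
    · simp [hΦ0]
    · simpa using (tendsto_heatSymbol_atTop hη).smul_const (Φ η)

lemma fourier_fourierMultiplierCLM_apply {m : V → ℝ} (hm : m.HasTemperateGrowth) (f : 𝓢(V, ℂ))
    (η : V) : 𝓕 (SchwartzMap.fourierMultiplierCLM ℂ m f) η = m η • 𝓕 f η := by
  rw [SchwartzMap.fourierMultiplierCLM_apply, FourierTransform.fourier_fourierInv_eq,
    SchwartzMap.smulLeftCLM_apply_apply hm]

lemma fourier_lineDeriv_apply (f : 𝓢(V, ℂ)) (v η : V) :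
    𝓕 (∂_{v} f) η = (2 * π * ⟪η, v⟫ : ℝ) • Complex.I • 𝓕 f η := by
  rw [SchwartzMap.fourier_lineDerivOp_eq, smul_apply,
    SchwartzMap.smulLeftCLM_apply_apply (by fun_prop)]
  simp only [smul_eq_mul, Complex.real_smul, Complex.ofReal_mul, Complex.ofReal_ofNat]
  ring

open Laplacian in
lemma fourier_laplacian_apply (f : 𝓢(V, ℂ)) (η : V) :
    𝓕 (Δ f) η = -(4 * π ^ 2 * ‖η‖ ^ 2) • 𝓕 f η := by
  have hnorm : Function.HasTemperateGrowth (‖·‖ ^ 2 : V → ℝ) :=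
    Function.hasTemperateGrowth_norm_sq V
  rw [SchwartzMap.laplacian_eq_fourierMultiplierCLM, FourierTransform.fourier_smul, smul_apply,
    fourier_fourierMultiplierCLM_apply hnorm, smul_smul]
  congr 1
  ring

lemma schwartzMap_ext_fourier {f g : 𝓢(V, ℂ)} (h : ∀ η, 𝓕 f η = 𝓕 g η) : f = g := by
  simpa using congrArg (𝓕⁻ : 𝓢(V, ℂ) → 𝓢(V, ℂ)) (SchwartzMap.ext h)

/-- The heat operator `exp (tΔ)` on Schwartz functions, for `t ≥ 0`. -/
noncomputable def heat (t : ℝ) : 𝓢(V, ℂ) →L[ℝ] 𝓢(V, ℂ) :=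
  SchwartzMap.fourierMultiplierCLM ℂ (heatSymbol t)

@[simp] lemma heat_zero (f : 𝓢(V, ℂ)) : heat 0 f = f := by simp [heat]

lemma fourier_heat (t : ℝ) (f : 𝓢(V, ℂ)) (η : V) : 𝓕 (heat t f) η = heatSymbol t η • 𝓕 f η :=
  fourier_fourierMultiplierCLM_apply (by fun_prop) f η

lemma heat_apply (t : ℝ) (f : 𝓢(V, ℂ)) (x : V) :
    heat t f x = ∫ η, 𝐞 ⟪η, x⟫ • heatSymbol t η • 𝓕 f η := by
  rw [heat, SchwartzMap.fourierMultiplierCLM_apply, SchwartzMap.fourierInv_coe, Real.fourierInv_eq]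
  simp only [SchwartzMap.smulLeftCLM_apply_apply (hasTemperateGrowth_heatSymbol t)]

lemma continuous_heat_integrand (f : 𝓢(V, ℂ)) :
    Continuous fun p : (ℝ × V) × V ↦ 𝐞 ⟪p.2, p.1.2⟫ • heatSymbol p.1.1 p.2 • 𝓕 f p.2 := by
  have : Continuous fun p : (ℝ × V) × V ↦ (𝐞 ⟪p.2, p.1.2⟫ : ℂ) :=
    continuous_subtype_val.comp (Real.continuous_fourierChar.comp (by fun_prop))
  have : Continuous fun p : (ℝ × V) × V ↦ heatSymbol p.1.1 p.2 :=
    continuous_heatSymbol.comp (by fun_prop : Continuous fun p : (ℝ × V) × V ↦ (p.1.1, p.2))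
  have hf : Continuous fun p : (ℝ × V) × V ↦ 𝓕 f p.2 := (𝓕 f).continuous.comp continuous_snd
  simp only [Circle.smul_def]
  fun_prop

lemma norm_heat_integrand_le (t : ℝ) (f : 𝓢(V, ℂ)) (x η : V) :
    ‖𝐞 ⟪η, x⟫ • heatSymbol t η • 𝓕 f η‖ ≤ ‖𝓕 f η‖ := by
  rw [Circle.norm_smul]
  exact norm_heatSymbol_smul_le t η _

lemma norm_heat_le (t : ℝ) (f : 𝓢(V, ℂ)) (x : V) : ‖heat t f x‖ ≤ ∫ η, ‖𝓕 f η‖ := by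
  rw [heat_apply]
  exact norm_integral_le_of_norm_le (𝓕 f).integrable.norm
    (.of_forall fun η ↦ norm_heat_integrand_le t f x η)

lemma continuous_heat (f : 𝓢(V, ℂ)) : Continuous fun p : ℝ × V ↦ heat p.1 f p.2 := by
  simp only [heat_apply]
  exact continuous_of_dominated (bound := fun η ↦ ‖𝓕 f η‖)
    (fun p ↦ ((continuous_heat_integrand f).comp
      (Continuous.prodMk_right p)).aestronglyMeasurable)
    (fun p ↦ .of_forall fun η ↦ norm_heat_integrand_le p.1 f p.2 η) (𝓕 f).integrable.norm
    (.of_forall fun η ↦ (continuous_heat_integrand f).comp (Continuous.prodMk_left η))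

lemma integrable_norm_sq_schwartz (f : 𝓢(V, ℂ)) : Integrable fun x ↦ ‖f x‖ ^ 2 := by
  simpa using (f.memLp 2 volume).integrable_norm_pow two_ne_zero

lemma integral_norm_sq_heat_le (t : ℝ) (f : 𝓢(V, ℂ)) :
    ∫ x, ‖heat t f x‖ ^ 2 ≤ ∫ x, ‖f x‖ ^ 2 := by
  rw [← SchwartzMap.integral_norm_sq_fourier (heat t f), ← SchwartzMap.integral_norm_sq_fourier f]
  refine integral_mono (integrable_norm_sq_schwartz _) (integrable_norm_sq_schwartz _) fun η ↦ ?_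
  simp only [fourier_heat]
  gcongr
  exact norm_heatSymbol_smul_le t η _

lemma lineDeriv_heat (t : ℝ) (v : V) (f : 𝓢(V, ℂ)) : ∂_{v} (heat t f) = heat t (∂_{v} f) :=
  schwartzMap_ext_fourier fun η ↦ by
    simp only [fourier_lineDeriv_apply, fourier_heat, smul_comm (heatSymbol t η)]

lemma hasLineDerivAt_heat (t : ℝ) (v : V) (f : 𝓢(V, ℂ)) (x : V) :
    HasLineDerivAt ℝ (heat t f) (heat t (∂_{v} f) x) x v := by
  rw [← lineDeriv_heat, SchwartzMap.lineDerivOp_apply_eq_fderiv]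
  exact (heat t f).differentiableAt.hasFDerivAt.hasLineDerivAt v

open Laplacian in
lemma hasDerivAt_heat (f : 𝓢(V, ℂ)) {t : ℝ} (ht : 0 < t) (x : V) :
    HasDerivAt (fun s ↦ heat s f x) (heat t (Δ f) x) t := by
  have hint (g : 𝓢(V, ℂ)) : Integrable fun η ↦ 𝐞 ⟪η, x⟫ • 𝓕 g η := by
    simpa using (Real.fourierIntegral_convergent_iff (μ := volume) (-x)).2 (𝓕 g).integrable
  have hlaplacian (η : V) :
      -(4 * π ^ 2 * ‖η‖ ^ 2) • 𝐞 ⟪η, x⟫ • 𝓕 f η = 𝐞 ⟪η, x⟫ • 𝓕 (Δ f) η := by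
    rw [fourier_laplacian_apply, smul_comm]
  simp only [heat_apply, smul_comm _ (heatSymbol _ _)]
  simpa only [hlaplacian] using hasDerivAt_integral_heatSymbol_smul (hint f)
    (by simpa only [hlaplacian] using hint (Δ f)) ht

lemma isCaloric_heat {ι : Type*} [Fintype ι] (b : OrthonormalBasis ι ℝ V) (f : 𝓢(V, ℂ)) :
    IsCaloric volume b (fun t x ↦ heat t f x) (fun k t x ↦ heat t (∂_{b k} f) x)
      (fun k t x ↦ heat t (∂_{b k} (∂_{b k} f)) x) := by
  have hsq (t : ℝ) (g : 𝓢(V, ℂ)) := integrable_norm_sq_schwartz (heat t g)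
  have hsum_sq (t : ℝ) (g : ι → 𝓢(V, ℂ)) : Integrable fun x ↦ ∑ k, ‖heat t (g k) x‖ ^ 2 :=
    integrable_finsetSum _ fun k _ ↦ hsq t (g k)
  exact
    { continuous := continuous_heat f
      continuous_fst := fun k ↦ continuous_heat _
      continuous_snd := fun k ↦ continuous_heat _
      bounded := ⟨_, fun t x ↦ norm_heat_le t f x⟩
      integrable_energy := fun t ↦ ((hsq t f).add (hsum_sq t _)).add (hsum_sq t _)
      integral_energy_le := by
        refine ⟨(∫ x, ‖f x‖ ^ 2) + (∑ k, ∫ x, ‖∂_{b k} f x‖ ^ 2) +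
          ∑ k, ∫ x, ‖∂_{b k} (∂_{b k} f) x‖ ^ 2, fun t ↦ ?_⟩
        simp only [flowEnergy]
        rw [integral_add ((hsq t f).fun_add (hsum_sq t _)) (hsum_sq t _),
          integral_add (hsq t f) (hsum_sq t _), integral_finsetSum _ fun k _ ↦ hsq t _,
          integral_finsetSum _ fun k _ ↦ hsq t _]
        exact add_le_add (add_le_add (integral_norm_sq_heat_le t f)
          (Finset.sum_le_sum fun k _ ↦ integral_norm_sq_heat_le t _))
          (Finset.sum_le_sum fun k _ ↦ integral_norm_sq_heat_le t _)
      hasLineDerivAt := fun k t x ↦ hasLineDerivAt_heat t _ _ x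
      hasLineDerivAt_fst := fun k t x ↦ hasLineDerivAt_heat t _ _ x
      hasDerivAt := fun t ht x ↦ by
        simpa [SchwartzMap.laplacian_eq_sum b, map_sum] using hasDerivAt_heat f ht x }

end Heat

/-! ### The bilinear embedding -/

section BilinearEmbedding

lemma LqNorm_nonneg {α E : Type*} [MeasurableSpace α] [NormedAddCommGroup E] (μ : Measure α)
    (p : ℝ) (f : α → E) : 0 ≤ LqNorm μ p f :=
  Real.rpow_nonneg (integral_nonneg fun x ↦ by positivity) _

lemma LqNorm_rpow {α E : Type*} [MeasurableSpace α] [NormedAddCommGroup E] (μ : Measure α)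
    {p : ℝ} (hp : p ≠ 0) (f : α → E) : LqNorm μ p f ^ p = ∫ x, ‖f x‖ ^ p ∂μ := by
  rw [LqNorm, ← Real.rpow_mul (integral_nonneg fun x ↦ by positivity), one_div_mul_cancel hp,
    Real.rpow_one]

lemma LqNorm_const_smul {α E : Type*} [MeasurableSpace α] [NormedAddCommGroup E] [NormedSpace ℝ E]
    (μ : Measure α) {p : ℝ} (hp : p ≠ 0) (c : ℝ) (f : α → E) :
    LqNorm μ p (c • f) = |c| * LqNorm μ p f := by
  have hint : 0 ≤ ∫ x, ‖f x‖ ^ p ∂μ := integral_nonneg fun x ↦ by positivity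
  simp only [LqNorm, Pi.smul_apply, norm_smul, Real.norm_eq_abs,
    Real.mul_rpow (abs_nonneg c) (norm_nonneg _)]
  rw [integral_const_mul, Real.mul_rpow (by positivity) hint, ← Real.rpow_mul (abs_nonneg c),
    mul_one_div_cancel hp, Real.rpow_one]

lemma le_two_mul_of_forall_mul_le {p q A B C X : ℝ} (hp : 0 ≤ p) (hq : 0 ≤ q) (hA : 0 ≤ A)
    (hB : 0 ≤ B) (hC : 0 ≤ C)
    (h : ∀ s > 0, ∀ t > 0, s * t * X ≤ C * ((s * A) ^ p + (t * B) ^ q)) : X ≤ 2 * C * (A * B) := by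
  have hscale {r D δ : ℝ} (hr : 0 ≤ r) (hD : 0 ≤ D) (hδ : 0 < δ) : ((D + δ)⁻¹ * D) ^ r ≤ 1 :=
    Real.rpow_le_one (by positivity) (inv_mul_le_one_of_le₀ (by linarith) (by linarith)) hr
  have hδ (δ : ℝ) (hδ : 0 < δ) : X ≤ 2 * C * ((A + δ) * (B + δ)) := by
    have hX : (A + δ)⁻¹ * (B + δ)⁻¹ * X ≤ C * (1 + 1) :=
      (h _ (by positivity) _ (by positivity)).trans
        (mul_le_mul_of_nonneg_left (add_le_add (hscale hp hA hδ) (hscale hq hB hδ)) hC)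
    rw [← mul_inv, inv_mul_le_iff₀ (by positivity)] at hX
    linarith
  have hlim : Tendsto (fun δ ↦ 2 * C * ((A + δ) * (B + δ))) (𝓝[>] 0)
      (𝓝 (2 * C * ((A + 0) * (B + 0)))) :=
    (Continuous.tendsto (by fun_prop) 0).mono_left nhdsWithin_le_nhds
  simpa using ge_of_tendsto hlim (eventually_nhdsWithin_of_forall hδ)

variable {V : Type*} [NormedAddCommGroup V] [InnerProductSpace ℝ V] [FiniteDimensional ℝ V]
  [MeasurableSpace V] [BorelSpace V]

lemma integrable_norm_rpow_schwartz (f : 𝓢(V, ℂ)) {p : ℝ} (hp : 0 < p) :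
    Integrable fun x ↦ ‖f x‖ ^ p := by
  simpa [ENNReal.toReal_ofReal hp.le] using
    (f.memLp (ENNReal.ofReal p) volume).integrable_norm_rpow (by simpa using hp)
      ENNReal.ofReal_ne_top

lemma integrable_norm_sq_heat_prod (f : 𝓢(V, ℂ)) (ν : Measure ℝ) [IsFiniteMeasure ν] :
    Integrable (fun z : ℝ × V ↦ ‖heat z.1 f z.2‖ ^ 2) (ν.prod volume) :=
  integrable_prod_of_integral_norm_le ((continuous_heat f).norm.pow 2).aestronglyMeasurable
    (fun t ↦ integrable_norm_sq_schwartz (heat t f)) fun t ↦ by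
      simpa using integral_norm_sq_heat_le t f

lemma integrable_norm_heat_mul_norm_heat (f g : 𝓢(V, ℂ)) (ν : Measure ℝ) [IsFiniteMeasure ν] :
    Integrable (fun z : ℝ × V ↦ ‖heat z.1 f z.2‖ * ‖heat z.1 g z.2‖) (ν.prod volume) := by
  refine ((integrable_norm_sq_heat_prod f ν).add (integrable_norm_sq_heat_prod g ν)).mono'
    ((continuous_heat f).norm.mul (continuous_heat g).norm).aestronglyMeasurable
    (.of_forall fun z ↦ ?_)
  rw [norm_of_nonneg (by positivity), Pi.add_apply]
  nlinarith [two_mul_le_add_sq ‖heat z.1 f z.2‖ ‖heat z.1 g z.2‖,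
    sq_nonneg ‖heat z.1 f z.2‖, sq_nonneg ‖heat z.1 g z.2‖]

variable {ι : Type*} [Fintype ι] (b : OrthonormalBasis ι ℝ V)

lemma integral_norm_heat_lineDeriv_mul_le_integral_complexBellman {a σ κ : ℝ} (ha : 1 ≤ a)
    (hσ : a * (1 - 2 * σ) = 1) (hκ : κ ≠ 0) (f g : 𝓢(V, ℂ)) (i j : ι) {T : ℝ} (hT : 0 ≤ T) :
    2 * ∫ z, ‖heat z.1 (∂_{b i} f) z.2‖ * ‖heat z.1 (∂_{b j} g) z.2‖
        ∂(volume.restrict (Set.Ioc 0 T)).prod volume ≤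
      ∫ x, complexBellman a σ κ (f x, g x) := by
  have hflow := (isCaloric_heat b f).prodMk (isCaloric_heat b g)
  have hB := contDiff_complexBellman (σ := σ) ha hκ
  have hB₀ := complexBellman_nonneg (κ := κ) ha hσ
  have hdissipation := hflow.integral_dissipation_prod_le hB hB₀ complexBellman_zero hT
  simp only [heat_zero] at hdissipation
  refine le_trans ?_ hdissipation
  rw [← integral_const_mul]
  exact integral_mono ((integrable_norm_heat_mul_norm_heat _ _ _).const_mul 2)
    (hflow.integrable_dissipation_prod hB hB₀ complexBellman_zero _) fun z ↦
      two_mul_norm_mul_norm_le_sum_iteratedFDeriv_two_complexBellman ha hσ hκ _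
        (fun k ↦ (heat z.1 (∂_{b k} f) z.2, heat z.1 (∂_{b k} g) z.2)) i j

lemma integral_complexBellman_le {a σ κ : ℝ} (ha : 1 ≤ a) (hσ : a * (1 - 2 * σ) = 1)
    (f g : 𝓢(V, ℂ)) :
    ∫ x, complexBellman a σ κ (f x, g x) ≤ 4 * ((bellmanConst a σ + 1) *
      (∫ x, ‖g x‖ ^ (2 - 2 * σ)) + 2 * (∫ x, ‖f x‖ ^ (a + 1)) + (κ ^ 2) ^ σ * ∫ x, ‖f x‖ ^ 2) := by
  have hσ_lt : 0 < 2 - 2 * σ := by nlinarith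
  have hg := (integrable_norm_rpow_schwartz g hσ_lt).const_mul (bellmanConst a σ + 1)
  have hf := (integrable_norm_rpow_schwartz f (by linarith : 0 < a + 1)).const_mul 2
  have hf₂ := (integrable_norm_sq_schwartz f).const_mul ((κ ^ 2) ^ σ)
  rw [← integral_const_mul, ← integral_const_mul, ← integral_const_mul, ← integral_add hg hf,
    ← integral_add (hg.fun_add hf) hf₂, ← integral_const_mul]
  exact integral_mono_of_nonneg (.of_forall fun x ↦ complexBellman_nonneg ha hσ _)
    (((hg.fun_add hf).fun_add hf₂).const_mul 4) (.of_forall fun x ↦ complexBellman_le ha hσ _)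

lemma integral_norm_heat_lineDeriv_mul_le_add {a σ : ℝ} (ha : 1 ≤ a) (hσ : a * (1 - 2 * σ) = 1)
    (f g : 𝓢(V, ℂ)) (i j : ι) {T : ℝ} (hT : 0 ≤ T) :
    ∫ z, ‖heat z.1 (∂_{b i} f) z.2‖ * ‖heat z.1 (∂_{b j} g) z.2‖
        ∂(volume.restrict (Set.Ioc 0 T)).prod volume ≤
      2 * (bellmanConst a σ + 3) * ((∫ x, ‖f x‖ ^ (a + 1)) + ∫ x, ‖g x‖ ^ (2 - 2 * σ)) := by
  have hle {κ : ℝ} (hκ : κ ≠ 0) :=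
    (integral_norm_heat_lineDeriv_mul_le_integral_complexBellman b ha hσ hκ f g i j hT).trans
      (integral_complexBellman_le ha hσ f g)
  set G := ∫ x, ‖g x‖ ^ (2 - 2 * σ)
  set F := ∫ x, ‖f x‖ ^ (a + 1)
  have hF : 0 ≤ F := integral_nonneg fun x ↦ by positivity
  have hG : 0 ≤ G := integral_nonneg fun x ↦ by positivity
  have hA := bellmanConst_nonneg ha hσ
  suffices 2 * ∫ z, ‖heat z.1 (∂_{b i} f) z.2‖ * ‖heat z.1 (∂_{b j} g) z.2‖
      ∂(volume.restrict (Set.Ioc 0 T)).prod volume ≤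
      4 * ((bellmanConst a σ + 1) * G + 2 * F + F) by
    nlinarith [mul_nonneg hA hF]
  rcases (by nlinarith : 0 ≤ σ).eq_or_lt with rfl | hσ_pos
  · obtain rfl : a = 1 := by linarith
    have hF_eq : F = ∫ x, ‖f x‖ ^ 2 := by
      simp only [F, one_add_one_eq_two, Real.rpow_two]
    simpa [hF_eq] using hle one_ne_zero
  · have hcont : Continuous fun κ : ℝ ↦ (κ ^ 2) ^ σ :=
      (continuous_pow 2).rpow_const fun _ ↦ .inr hσ_pos.le
    have hlim : Tendsto (fun κ : ℝ ↦ 4 * ((bellmanConst a σ + 1) * G + 2 * F +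
        (κ ^ 2) ^ σ * ∫ x, ‖f x‖ ^ 2)) (𝓝[≠] 0) (𝓝 (4 * ((bellmanConst a σ + 1) * G + 2 * F +
          ((0 : ℝ) ^ 2) ^ σ * ∫ x, ‖f x‖ ^ 2))) :=
      (Continuous.tendsto (by fun_prop) 0).mono_left nhdsWithin_le_nhds
    have hle_lim := ge_of_tendsto hlim (eventually_nhdsWithin_of_forall fun κ hκ ↦ hle hκ)
    simp only [ne_eq, OfNat.ofNat_ne_zero, not_false_eq_true, zero_pow,
      Real.zero_rpow hσ_pos.ne', zero_mul, add_zero] at hle_lim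
    linarith

lemma integral_norm_heat_lineDeriv_mul_le {a σ : ℝ} (ha : 1 ≤ a) (hσ : a * (1 - 2 * σ) = 1)
    (f g : 𝓢(V, ℂ)) (i j : ι) {T : ℝ} (hT : 0 ≤ T) :
    ∫ z, ‖heat z.1 (∂_{b i} f) z.2‖ * ‖heat z.1 (∂_{b j} g) z.2‖
        ∂(volume.restrict (Set.Ioc 0 T)).prod volume ≤
      2 * (2 * (bellmanConst a σ + 3)) *
        (LqNorm volume (a + 1) f * LqNorm volume (2 - 2 * σ) g) := by
  have ha₁ : 0 < a + 1 := by linarith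
  have hσ₁ : 0 < 2 - 2 * σ := by nlinarith
  have hA := bellmanConst_nonneg ha hσ
  refine le_two_mul_of_forall_mul_le ha₁.le hσ₁.le (LqNorm_nonneg _ _ _) (LqNorm_nonneg _ _ _)
    (by positivity) fun s hs t ht ↦ ?_
  have h := integral_norm_heat_lineDeriv_mul_le_add b ha hσ (s • f) (t • g) i j hT
  rw [← LqNorm_rpow _ ha₁.ne', ← LqNorm_rpow _ hσ₁.ne'] at h
  simp only [LineDeriv.lineDerivOp_smul, map_smul, smul_apply, norm_smul,
    FunLike.coe_smul, LqNorm_const_smul _ ha₁.ne', LqNorm_const_smul _ hσ₁.ne', abs_of_pos hs,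
    abs_of_pos ht, norm_of_nonneg hs.le, norm_of_nonneg ht.le, mul_mul_mul_comm s,
    integral_const_mul] at h
  exact h

lemma exists_integral_norm_heat_lineDeriv_mul_le {p q : ℝ} (hpq : p.HolderConjugate q) :
    ∃ C > 0, ∀ (f g : 𝓢(V, ℂ)) (i j : ι) (T : ℝ), 0 ≤ T →
      ∫ z, ‖heat z.1 (∂_{b i} f) z.2‖ * ‖heat z.1 (∂_{b j} g) z.2‖
          ∂(volume.restrict (Set.Ioc 0 T)).prod volume ≤
        C * (LqNorm volume p f * LqNorm volume q g) := by
  wlog hp : 2 ≤ p generalizing p q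
  · have hq : 2 ≤ q := by nlinarith [hpq.mul_eq_add, hpq.lt, hpq.symm.lt]
    obtain ⟨C, hC, h⟩ := this hpq.symm hq
    exact ⟨C, hC, fun f g i j T hT ↦ by simpa only [mul_comm] using h g f j i T hT⟩
  have ha : 1 ≤ p - 1 := by linarith
  have hσ : (p - 1) * (1 - 2 * (1 - q / 2)) = 1 := by nlinarith [hpq.mul_eq_add]
  refine ⟨2 * (2 * (bellmanConst (p - 1) (1 - q / 2) + 3)), ?_, fun f g i j T hT ↦ ?_⟩
  · linarith [bellmanConst_nonneg ha hσ]
  · simpa [mul_sub, mul_div_cancel₀] using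
      integral_norm_heat_lineDeriv_mul_le b ha hσ f g i j hT

end BilinearEmbedding

/-! ### The bilinear estimate for the Riesz symbol -/

section RieszSymbol

variable {V : Type*} [NormedAddCommGroup V] [InnerProductSpace ℝ V]

/-- The Fourier symbol `⟪η, v⟫⟪η, w⟫ / ‖η‖²` of `∂ᵥ ∂_w Δ⁻¹`, the product of the Riesz transforms in
the directions `v` and `w`; it is `0` at `η = 0`. -/
noncomputable def rieszSymbol (v w η : V) : ℝ := ⟪η, v⟫ * ⟪η, w⟫ / ‖η‖ ^ 2

@[simp] lemma rieszSymbol_zero (v w : V) : rieszSymbol v w 0 = 0 := by simp [rieszSymbol]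

lemma sq_norm_mul_rieszSymbol (v w η : V) :
    ‖η‖ ^ 2 * rieszSymbol v w η = ⟪η, v⟫ * ⟪η, w⟫ := by
  rcases eq_or_ne η 0 with rfl | hη
  · simp
  · exact mul_div_cancel₀ _ (by positivity)

lemma norm_rieszSymbol_le (v w η : V) : ‖rieszSymbol v w η‖ ≤ ‖v‖ * ‖w‖ := by
  rw [rieszSymbol, norm_div, norm_mul, norm_pow, norm_norm]
  refine div_le_of_le_mul₀ (by positivity) (by positivity) ?_
  calc ‖⟪η, v⟫‖ * ‖⟪η, w⟫‖ ≤ (‖η‖ * ‖v‖) * (‖η‖ * ‖w‖) := by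
        gcongr <;> exact norm_inner_le_norm _ _
    _ = ‖v‖ * ‖w‖ * ‖η‖ ^ 2 := by ring

variable [MeasurableSpace V] [BorelSpace V]

@[fun_prop]
lemma measurable_rieszSymbol (v w : V) : Measurable (rieszSymbol v w) := by
  unfold rieszSymbol
  exact ((by fun_prop : Continuous fun η : V ↦ ⟪η, v⟫ * ⟪η, w⟫).measurable).div
    (by fun_prop : Continuous fun η : V ↦ ‖η‖ ^ 2).measurable

variable [FiniteDimensional ℝ V]

lemma integrable_rieszSymbol_smul {E : Type*} [NormedAddCommGroup E] [NormedSpace ℝ E]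
    {Φ : V → E} (hΦ : Integrable Φ) (v w : V) :
    Integrable fun η ↦ rieszSymbol v w η • Φ η :=
  hΦ.bdd_smul (‖v‖ * ‖w‖) (measurable_rieszSymbol v w).aestronglyMeasurable
    (.of_forall (norm_rieszSymbol_le v w))

lemma integrable_fourier_mul_fourierInv (f g : 𝓢(V, ℂ)) :
    Integrable fun η ↦ 𝓕 f η * 𝓕⁻ g η :=
  ((𝓕 f).memLp 2 volume).integrable_mul ((𝓕⁻ g).memLp 2 volume)

lemma fourierInv_apply_eq_fourier_neg (f : 𝓢(V, ℂ)) (η : V) : 𝓕⁻ f η = 𝓕 f (-η) := by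
  rw [SchwartzMap.fourierInv_coe, SchwartzMap.fourier_coe, Real.fourierInv_eq_fourier_neg]

lemma integral_heat_mul_heat (f g : 𝓢(V, ℂ)) (t : ℝ) :
    ∫ x, heat t f x * heat t g x = ∫ η, heatSymbol (2 * t) η • (𝓕 f η * 𝓕⁻ g η) := by
  have hparseval : ∫ x, heat t f x * heat t g x = ∫ η, 𝓕 (heat t f) η * 𝓕⁻ (heat t g) η := by
    simpa using (SchwartzMap.integral_fourier_mul_eq (heat t f) (𝓕⁻ (heat t g))).symm
  rw [hparseval]
  congr 1 with η
  rw [fourierInv_apply_eq_fourier_neg, fourierInv_apply_eq_fourier_neg, fourier_heat, fourier_heat,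
    smul_mul_smul_comm, heatSymbol_neg, heatSymbol_mul_self]

lemma fourier_lineDeriv_mul_fourierInv_lineDeriv (f g : 𝓢(V, ℂ)) (v w η : V) :
    𝓕 (∂_{v} f) η * 𝓕⁻ (∂_{w} g) η =
      (4 * π ^ 2 * ‖η‖ ^ 2) • rieszSymbol v w η • (𝓕 f η * 𝓕⁻ g η) := by
  rw [smul_smul, mul_assoc _ (‖η‖ ^ 2), sq_norm_mul_rieszSymbol, fourierInv_apply_eq_fourier_neg,
    fourierInv_apply_eq_fourier_neg, fourier_lineDeriv_apply, fourier_lineDeriv_apply,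
    inner_neg_left]
  simp only [smul_eq_mul, Complex.real_smul]
  push_cast
  linear_combination (-4 * π ^ 2 * (⟪η, v⟫ : ℂ) * ⟪η, w⟫ * 𝓕 f η * 𝓕 g (-η)) * Complex.I_sq

lemma hasDerivAt_integral_heatSymbol_rieszSymbol (f g : 𝓢(V, ℂ)) (v w : V) {t : ℝ} (ht : 0 < t) :
    HasDerivAt (fun s ↦ ∫ η, heatSymbol (2 * s) η • rieszSymbol v w η • (𝓕 f η * 𝓕⁻ g η))
      (-2 * ∫ x, heat t (∂_{v} f) x * heat t (∂_{w} g) x) t := by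
  have hneg (η : V) : -(4 * π ^ 2 * ‖η‖ ^ 2) • rieszSymbol v w η • (𝓕 f η * 𝓕⁻ g η) =
      -(𝓕 (∂_{v} f) η * 𝓕⁻ (∂_{w} g) η) := by
    rw [fourier_lineDeriv_mul_fourierInv_lineDeriv, neg_smul]
  have hderiv := hasDerivAt_integral_heatSymbol_smul
    (integrable_rieszSymbol_smul (integrable_fourier_mul_fourierInv f g) v w)
    (by simpa only [hneg] using (integrable_fourier_mul_fourierInv (∂_{v} f) (∂_{w} g)).fun_neg)
    (mul_pos two_pos ht)
  simp only [hneg, smul_neg, integral_neg, ← integral_heat_mul_heat] at hderiv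
  refine (hderiv.scomp t ((hasDerivAt_id t).const_mul 2)).congr_deriv ?_
  simp only [mul_one, Complex.real_smul]
  push_cast
  ring

lemma norm_integral_heatSymbol_rieszSymbol_sub_le (f g : 𝓢(V, ℂ)) (v w : V) {s T : ℝ} (hs : 0 < s)
    (hT : s ≤ T) :
    ‖(∫ η, heatSymbol (2 * T) η • rieszSymbol v w η • (𝓕 f η * 𝓕⁻ g η)) -
        ∫ η, heatSymbol (2 * s) η • rieszSymbol v w η • (𝓕 f η * 𝓕⁻ g η)‖ ≤
      2 * ∫ z, ‖heat z.1 (∂_{v} f) z.2‖ * ‖heat z.1 (∂_{w} g) z.2‖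
        ∂(volume.restrict (Set.Ioc 0 T)).prod volume := by
  have hnorm := integrable_norm_heat_mul_norm_heat (∂_{v} f) (∂_{w} g)
    (volume.restrict (Set.Ioc 0 T))
  have hprod : Integrable (fun z : ℝ × V ↦ heat z.1 (∂_{v} f) z.2 * heat z.1 (∂_{w} g) z.2)
      ((volume.restrict (Set.Ioc 0 T)).prod volume) :=
    hnorm.mono' ((continuous_heat _).mul (continuous_heat _)).aestronglyMeasurable
      (.of_forall fun z ↦ (norm_mul _ _).le)
  have hsub : Set.Ioc s T ⊆ Set.Ioc 0 T := Set.Ioc_subset_Ioc_left hs.le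
  rw [← intervalIntegral.integral_eq_sub_of_hasDerivAt (a := s) (b := T)
    (fun t ht ↦ hasDerivAt_integral_heatSymbol_rieszSymbol f g v w
      (hs.trans_le (Set.uIcc_of_le hT ▸ ht).1))
    ((intervalIntegrable_iff_integrableOn_Ioc_of_le hT).2
      ((hprod.integral_prod_left.mono_measure (Measure.restrict_mono hsub le_rfl)).const_mul _)),
    intervalIntegral.integral_of_le hT, integral_const_mul, norm_mul, norm_neg, Complex.norm_two,
    integral_prod _ hnorm]
  gcongr
  calc ‖∫ t in Set.Ioc s T, ∫ x, heat t (∂_{v} f) x * heat t (∂_{w} g) x‖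
      ≤ ∫ t in Set.Ioc s T, ∫ x, ‖heat t (∂_{v} f) x‖ * ‖heat t (∂_{w} g) x‖ :=
        norm_integral_le_of_norm_le (IntegrableOn.mono_set hnorm.integral_prod_left hsub)
          (.of_forall fun t ↦ by
            simpa only [norm_mul] using norm_integral_le_integral_norm (μ := volume)
              fun x ↦ heat t (∂_{v} f) x * heat t (∂_{w} g) x)
    _ ≤ ∫ t in Set.Ioc 0 T, ∫ x, ‖heat t (∂_{v} f) x‖ * ‖heat t (∂_{w} g) x‖ :=
        setIntegral_mono_set hnorm.integral_prod_left
          (.of_forall fun t ↦ integral_nonneg fun x ↦ by positivity) hsub.eventuallyLE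

lemma exists_norm_integral_heatSymbol_rieszSymbol_le {ι : Type*} [Fintype ι]
    (b : OrthonormalBasis ι ℝ V) {p q : ℝ} (hpq : p.HolderConjugate q) :
    ∃ C > 0, ∀ (f g : 𝓢(V, ℂ)) (i j : ι) (ε : ℝ), 0 < ε →
      ‖∫ η, heatSymbol ε η • rieszSymbol (b i) (b j) η • (𝓕 f η * 𝓕⁻ g η)‖ ≤
        C * (LqNorm volume p f * LqNorm volume q g) := by
  obtain ⟨C, hC, hbilinear⟩ := exists_integral_norm_heat_lineDeriv_mul_le b hpq
  refine ⟨2 * C, by positivity, fun f g i j ε hε ↦ ?_⟩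
  have hlim := ((tendsto_integral_heatSymbol_smul (integrable_rieszSymbol_smul
    (integrable_fourier_mul_fourierInv f g) (b i) (b j)) (by simp)).comp
      (tendsto_id.const_mul_atTop two_pos)).sub_const
    (∫ η, heatSymbol (2 * (ε / 2)) η • rieszSymbol (b i) (b j) η • (𝓕 f η * 𝓕⁻ g η))
  have hle := le_of_tendsto hlim.norm <| (eventually_ge_atTop (ε / 2)).mono fun T hT ↦
    (norm_integral_heatSymbol_rieszSymbol_sub_le f g (b i) (b j) (half_pos hε) hT).trans
      (mul_le_mul_of_nonneg_left (hbilinear f g i j T (by linarith)) zero_le_two)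
  simpa only [zero_sub, norm_neg, mul_div_cancel₀ ε two_ne_zero, ← mul_assoc] using hle

end RieszSymbol

/-! ### Duality with Schwartz functions -/

section Duality

open scoped ComplexConjugate

lemma LqNorm_eq_toReal_eLpNorm {α E : Type*} [MeasurableSpace α] [NormedAddCommGroup E]
    {μ : Measure α} {p : ℝ} (hp : 0 < p) {f : α → E} (hf : MemLp f (ENNReal.ofReal p) μ) :
    LqNorm μ p f = (eLpNorm f (ENNReal.ofReal p) μ).toReal := by
  have hnonneg : 0 ≤ (∫ x, ‖f x‖ ^ p ∂μ) ^ p⁻¹ := by positivity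
  rw [hf.eLpNorm_eq_integral_rpow_norm (by simpa) ENNReal.ofReal_ne_top,
    ENNReal.toReal_ofReal hp.le, ENNReal.toReal_ofReal hnonneg, LqNorm, one_div]

lemma eLpNorm_eq_ofReal_LqNorm {α E : Type*} [MeasurableSpace α] [NormedAddCommGroup E]
    {μ : Measure α} {p : ℝ} (hp : 0 < p) {f : α → E} (hf : MemLp f (ENNReal.ofReal p) μ) :
    eLpNorm f (ENNReal.ofReal p) μ = ENNReal.ofReal (LqNorm μ p f) := by
  rw [LqNorm_eq_toReal_eLpNorm hp hf, ENNReal.ofReal_toReal hf.eLpNorm_ne_top]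

variable {p q K : ℝ}

lemma rpow_one_div_le_of_le_mul_rpow_one_div (hpq : p.HolderConjugate q) (hK : 0 ≤ K) {I : ℝ}
    (hI : 0 ≤ I) (h : I ≤ K * I ^ (1 / q)) : I ^ (1 / p) ≤ K := by
  rcases hI.eq_or_lt with rfl | hpos
  · rwa [zero_rpow (one_div_ne_zero hpq.ne_zero)]
  · refine le_of_mul_le_mul_right ?_ (rpow_pos_of_pos hpos (1 / q))
    rwa [← rpow_add hpos, one_div p, one_div q, hpq.inv_add_inv_eq_one, rpow_one, ← one_div q]

/-- The extremal function `|w|^(p-2) w̄` for Hölder's inequality against `w`. -/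
noncomputable def holderExtremal {α : Type*} (p : ℝ) (w : α → ℂ) (x : α) : ℂ :=
  ‖w x‖ ^ (p - 2) • conj (w x)

lemma norm_holderExtremal_rpow {α : Type*} (hpq : p.HolderConjugate q) (w : α → ℂ) (x : α) :
    ‖holderExtremal p w x‖ ^ q = ‖w x‖ ^ p := by
  rcases (norm_nonneg (w x)).eq_or_lt with hzero | hpos
  · simp [holderExtremal, norm_eq_zero.1 hzero.symm, hpq.ne_zero, hpq.symm.ne_zero]
  · rw [holderExtremal, norm_smul, RCLike.norm_conj, norm_of_nonneg (by positivity),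
      ← rpow_add_one hpos.ne', ← rpow_mul hpos.le]
    congr 1
    linear_combination hpq.mul_eq_add

lemma mul_holderExtremal {α : Type*} (hp : p ≠ 0) (w : α → ℂ) (x : α) :
    w x * holderExtremal p w x = (‖w x‖ ^ p : ℝ) := by
  rcases (norm_nonneg (w x)).eq_or_lt with hzero | hpos
  · simp [norm_eq_zero.1 hzero.symm, hp]
  · rw [holderExtremal, mul_smul_comm, Complex.mul_conj, Complex.normSq_eq_norm_sq,
      Complex.real_smul, ← Complex.ofReal_mul, ← rpow_natCast, ← rpow_add hpos]
    norm_num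

lemma memLp_holderExtremal {α : Type*} [MeasurableSpace α] {μ : Measure α}
    (hpq : p.HolderConjugate q) {w : α → ℂ} (hw : MemLp w (ENNReal.ofReal p) μ) :
    MemLp (holderExtremal p w) (ENNReal.ofReal q) μ := by
  have hmeas : AEStronglyMeasurable (holderExtremal p w) μ :=
    (hw.aestronglyMeasurable.norm.aemeasurable.pow_const (p - 2)).aestronglyMeasurable.smul
      (Complex.continuous_conj.comp_aestronglyMeasurable hw.aestronglyMeasurable)
  have hint := hw.integrable_norm_rpow (by simpa using hpq.pos) ENNReal.ofReal_ne_top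
  refine (integrable_norm_rpow_iff hmeas (by simpa using hpq.symm.pos) ENNReal.ofReal_ne_top).1 ?_
  simpa only [ENNReal.toReal_ofReal hpq.nonneg, ENNReal.toReal_ofReal hpq.symm.nonneg,
    norm_holderExtremal_rpow hpq] using hint

variable {V : Type*} [NormedAddCommGroup V] [InnerProductSpace ℝ V] [FiniteDimensional ℝ V]
  [MeasurableSpace V] [BorelSpace V]

lemma norm_integral_mul_le_of_forall_schwartz (hpq : p.HolderConjugate q) {w : V → ℂ}
    (hw : MemLp w (ENNReal.ofReal p))
    (h : ∀ g : 𝓢(V, ℂ), ‖∫ x, w x * g x‖ ≤ K * LqNorm volume q g) {g : V → ℂ}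
    (hg : MemLp g (ENNReal.ofReal q)) : ‖∫ x, w x * g x‖ ≤ K * LqNorm volume q g := by
  have := hpq.ennrealOfReal
  have : Fact (1 ≤ ENNReal.ofReal p) := ⟨by simpa using hpq.lt.le⟩
  have : Fact (1 ≤ ENNReal.ofReal q) := ⟨by simpa using hpq.symm.lt.le⟩
  have hpair {g : V → ℂ} (hg : MemLp g (ENNReal.ofReal q)) :
      (ContinuousLinearMap.mul ℂ ℂ).lpPairing volume (ENNReal.ofReal p) (ENNReal.ofReal q)
        (hw.toLp w) (hg.toLp g) = ∫ x, w x * g x := by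
    rw [ContinuousLinearMap.lpPairing_eq_integral]
    refine integral_congr_ae ?_
    filter_upwards [hw.coeFn_toLp, hg.coeFn_toLp] with x hwx hgx
    rw [hwx, hgx, ContinuousLinearMap.mul_apply']
  have hnorm {g : V → ℂ} (hg : MemLp g (ENNReal.ofReal q)) :
      ‖hg.toLp g‖ = LqNorm volume q g := by
    rw [Lp.norm_toLp, LqNorm_eq_toReal_eLpNorm hpq.symm.pos hg]
  rw [← hpair hg, ← hnorm hg]
  refine (SchwartzMap.denseRange_toLpCLM ENNReal.ofReal_ne_top).induction_on
    (p := fun G ↦ ‖(ContinuousLinearMap.mul ℂ ℂ).lpPairing volume _ _ (hw.toLp w) G‖ ≤ K * ‖G‖)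
    _ (isClosed_le (by fun_prop) (by fun_prop)) fun φ ↦ ?_
  have hφ := φ.memLp (ENNReal.ofReal q) volume
  change ‖(ContinuousLinearMap.mul ℂ ℂ).lpPairing volume _ _ (hw.toLp w) (hφ.toLp φ)‖ ≤
    K * ‖hφ.toLp φ‖
  rw [hpair hφ, hnorm hφ]
  exact h φ

lemma LqNorm_le_of_forall_norm_integral_mul_le (hpq : p.HolderConjugate q) (hK : 0 ≤ K)
    {w : V → ℂ} (hw : MemLp w (ENNReal.ofReal p))
    (h : ∀ g : 𝓢(V, ℂ), ‖∫ x, w x * g x‖ ≤ K * LqNorm volume q g) :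
    LqNorm volume p w ≤ K := by
  have hnonneg : 0 ≤ ∫ x, ‖w x‖ ^ p := integral_nonneg fun x ↦ by positivity
  refine rpow_one_div_le_of_le_mul_rpow_one_div hpq hK hnonneg ?_
  have hle := norm_integral_mul_le_of_forall_schwartz hpq hw h (memLp_holderExtremal hpq hw)
  simp only [LqNorm, mul_holderExtremal hpq.ne_zero, norm_holderExtremal_rpow hpq] at hle
  rwa [integral_complex_ofReal, Complex.norm_real, norm_of_nonneg hnonneg] at hle

lemma LqNorm_contDiffBump_smul_le (hq : 0 < q) (χ : ContDiffBump (0 : V)) (g : 𝓢(V, ℂ)) :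
    LqNorm volume q (fun x ↦ χ x • g x) ≤ LqNorm volume q g := by
  refine rpow_le_rpow (integral_nonneg fun x ↦ by positivity) ?_ (by positivity)
  refine integral_mono_of_nonneg (.of_forall fun x ↦ by positivity)
    (integrable_norm_rpow_schwartz g hq) (.of_forall fun x ↦ rpow_le_rpow (norm_nonneg _) ?_ hq.le)
  rw [norm_smul, norm_of_nonneg χ.nonneg]
  exact mul_le_of_le_one_left (norm_nonneg _) χ.le_one

lemma eLpNorm_contDiffBump_smul_le (hpq : p.HolderConjugate q) (hK : 0 ≤ K) {w : V → ℂ}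
    (hw : Continuous w) (h : ∀ g : 𝓢(V, ℂ), ‖∫ x, w x * g x‖ ≤ K * LqNorm volume q g)
    (χ : ContDiffBump (0 : V)) :
    eLpNorm (fun x ↦ χ x • w x) (ENNReal.ofReal p) ≤ ENNReal.ofReal K := by
  have hmem : MemLp (fun x ↦ χ x • w x) (ENNReal.ofReal p) :=
    (χ.continuous.smul hw).memLp_of_hasCompactSupport χ.hasCompactSupport.smul_right
  rw [eLpNorm_eq_ofReal_LqNorm hpq.pos hmem]
  refine ENNReal.ofReal_le_ofReal
    (LqNorm_le_of_forall_norm_integral_mul_le hpq hK hmem fun g ↦ ?_)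
  have hsupp : HasCompactSupport fun x ↦ χ x • g x := χ.hasCompactSupport.smul_right
  have hle : ‖∫ x, w x * (χ x • g x)‖ ≤ K * LqNorm volume q (fun x ↦ χ x • g x) :=
    h (hsupp.toSchwartzMap (χ.contDiff.smul (g.smooth ⊤)))
  simp only [mul_smul_comm, ← smul_mul_assoc] at hle
  exact hle.trans (mul_le_mul_of_nonneg_left (LqNorm_contDiffBump_smul_le hpq.symm.pos χ g) hK)

lemma eLpNorm_le_of_forall_norm_integral_mul_le (hpq : p.HolderConjugate q) (hK : 0 ≤ K)
    {w : V → ℂ} (hw : Continuous w)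
    (h : ∀ g : 𝓢(V, ℂ), ‖∫ x, w x * g x‖ ≤ K * LqNorm volume q g) :
    eLpNorm w (ENNReal.ofReal p) ≤ ENNReal.ofReal K := by
  obtain ⟨χ, hχ⟩ : ∃ χ : ℕ → ContDiffBump (0 : V), ∀ n, n ≤ (χ n).rIn :=
    ⟨fun n ↦ ⟨n + 1, n + 2, by positivity, by linarith⟩, fun n ↦ by simp⟩
  have hlim (x : V) : Tendsto (fun n ↦ χ n x • w x) atTop (𝓝 (w x)) := by
    refine tendsto_const_nhds.congr' ?_
    filter_upwards [eventually_ge_atTop ⌈‖x‖⌉₊] with n hn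
    have hx : x ∈ Metric.closedBall 0 (χ n).rIn :=
      mem_closedBall_zero_iff.2 ((Nat.ceil_le.1 hn).trans (hχ n))
    rw [(χ n).one_of_mem_closedBall hx, one_smul]
  have hbound (n : ℕ) := eLpNorm_contDiffBump_smul_le hpq hK hw h (χ n)
  exact (Lp.eLpNorm_lim_le_liminf_eLpNorm
    (fun n ↦ ((χ n).continuous.smul hw).aestronglyMeasurable) w (.of_forall hlim)).trans
    ((liminf_le_liminf (.of_forall hbound)).trans_eq (liminf_const _))

end Duality

/-! ### Riesz transforms and the solution of `ΔU = div F` -/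

section RieszTransform

variable {V : Type*} [NormedAddCommGroup V] [InnerProductSpace ℝ V]

/-- The Fourier symbol of `f ↦ Δ⁻¹ ∂ᵥ f` divided by the imaginary unit; it is `0` at `η = 0`. -/
noncomputable def poissonSymbol (v η : V) : ℝ := -(⟪η, v⟫ / (2 * π * ‖η‖ ^ 2))

lemma two_pi_inner_mul_poissonSymbol (v w η : V) :
    2 * π * ⟪η, w⟫ * poissonSymbol v η = -rieszSymbol v w η := by
  rw [poissonSymbol, rieszSymbol]
  field_simp

lemma norm_poissonSymbol_le (v η : V) : ‖poissonSymbol v η‖ ≤ ‖v‖ * ‖η‖⁻¹ := by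
  rcases eq_or_ne η 0 with rfl | hη
  · simp [poissonSymbol]
  · rw [poissonSymbol, norm_neg, norm_div, norm_of_nonneg (by positivity : 0 ≤ 2 * π * ‖η‖ ^ 2),
      div_le_iff₀ (by positivity)]
    calc ‖⟪η, v⟫‖ ≤ 1 * (‖η‖ * ‖v‖) := by simpa using norm_inner_le_norm (𝕜 := ℝ) η v
      _ ≤ 2 * π * (‖η‖ * ‖v‖) := by gcongr; linarith [pi_gt_three]
      _ = ‖v‖ * ‖η‖⁻¹ * (2 * π * ‖η‖ ^ 2) := by field_simp

variable [MeasurableSpace V] [BorelSpace V]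

@[fun_prop]
lemma measurable_poissonSymbol (v : V) : Measurable (poissonSymbol v) := by
  unfold poissonSymbol
  exact ((by fun_prop : Continuous fun η : V ↦ ⟪η, v⟫).measurable.div
    (by fun_prop : Continuous fun η : V ↦ 2 * π * ‖η‖ ^ 2).measurable).neg

variable [FiniteDimensional ℝ V]

lemma continuous_fourierInv {φ : V → ℂ} (hφ : Integrable φ) : Continuous (𝓕⁻ φ) := by
  rw [← Real.Lp.fourierTransformInv_toLp (memLp_one_iff_integrable.2 hφ)]
  exact map_continuous _

lemma contDiff_fourierInv {φ : V → ℂ} (hφ : ∀ n : ℕ, Integrable fun η ↦ ‖η‖ ^ n * ‖φ η‖) :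
    ContDiff ℝ ∞ (𝓕⁻ φ) := by
  rw [show 𝓕⁻ φ = fun x ↦ 𝓕 φ (-x) from funext (Real.fourierInv_eq_fourier_neg φ)]
  exact (Real.contDiff_fourier fun n _ ↦ hφ n).comp contDiff_neg

lemma differentiable_fourierInv {φ : V → ℂ} (hφ : Integrable φ)
    (hφ₁ : Integrable fun η ↦ ‖η‖ * ‖φ η‖) : Differentiable ℝ (𝓕⁻ φ) := by
  rw [show 𝓕⁻ φ = fun x ↦ 𝓕 φ (-x) from funext (Real.fourierInv_eq_fourier_neg φ)]
  exact (Real.differentiable_fourier hφ hφ₁).comp differentiable_id.fun_neg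

lemma fderiv_fourierInv_apply {φ : V → ℂ} (hφ : Integrable φ)
    (hφ₁ : Integrable fun η ↦ ‖η‖ * ‖φ η‖) (x v : V) :
    fderiv ℝ (𝓕⁻ φ) x v = 𝓕⁻ (fun η ↦ (2 * π * ⟪η, v⟫ : ℝ) • Complex.I • φ η) x := by
  have hint : Integrable (VectorFourier.fourierSMulRight (innerSL ℝ) φ) :=
    (hφ₁.const_mul (2 * π * ‖innerSL ℝ (E := V)‖)).mono' hφ.1.fourierSMulRight
      (.of_forall fun η ↦
        (VectorFourier.norm_fourierSMulRight_le _ φ η).trans_eq (mul_assoc _ _ _))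
  have hderiv := (Real.hasFDerivAt_fourier hφ hφ₁ (-x)).comp x (hasFDerivAt_id x).fun_neg
  rw [show 𝓕⁻ φ = 𝓕 φ ∘ (-·) from funext (Real.fourierInv_eq_fourier_neg φ), hderiv.fderiv,
    ContinuousLinearMap.comp_apply, neg_apply, map_neg, ContinuousLinearMap.id_apply,
    Real.fourier_eq,
    ContinuousLinearMap.integral_apply ((Real.fourierIntegral_convergent_iff _).2 hint),
    Real.fourierInv_eq, ← integral_neg]
  congr 1 with η
  simp only [inner_neg_right, neg_neg, smul_apply, VectorFourier.fourierSMulRight_apply,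
    innerSL_apply_apply ℝ, Circle.smul_def, smul_eq_mul, Complex.real_smul]
  push_cast
  ring

lemma integral_fourierInv_mul {φ : V → ℂ} (hφ : Integrable φ) (g : 𝓢(V, ℂ)) :
    ∫ x, 𝓕⁻ φ x * g x = ∫ η, φ η * 𝓕⁻ g η := by
  have hflip := VectorFourier.integral_fourierIntegral_smul_eq_flip (L := -innerₗ V)
    Real.continuous_fourierChar continuous_inner.neg hφ (g.integrable (μ := volume))
  have hsymm : (-innerₗ V).flip = -innerₗ V := by ext; simp [real_inner_comm]
  rw [hsymm] at hflip
  rw [SchwartzMap.fourierInv_coe]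
  exact hflip

lemma fourierInv_sum_apply {ι : Type*} [Fintype ι] {φ : ι → V → ℂ}
    (hφ : ∀ j, Integrable (φ j)) (x : V) :
    𝓕⁻ (fun η ↦ ∑ j, φ j η) x = ∑ j, 𝓕⁻ (φ j) x := by
  simp only [Real.fourierInv_eq, Finset.smul_sum]
  exact integral_finsetSum _ fun j _ ↦ by
    simpa using (Real.fourierIntegral_convergent_iff (-x)).2 (hφ j)

/-- The operator `∂ᵥ ∂_w Δ⁻¹` on Schwartz functions, defined by its Fourier symbol. -/
noncomputable def rieszTransform (v w : V) (f : 𝓢(V, ℂ)) : V → ℂ :=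
  𝓕⁻ fun η ↦ rieszSymbol v w η • 𝓕 f η

lemma integrable_rieszSymbol_smul_fourier (v w : V) (f : 𝓢(V, ℂ)) :
    Integrable fun η ↦ rieszSymbol v w η • 𝓕 f η :=
  integrable_rieszSymbol_smul (𝓕 f).integrable v w

lemma continuous_rieszTransform (v w : V) (f : 𝓢(V, ℂ)) : Continuous (rieszTransform v w f) :=
  continuous_fourierInv (integrable_rieszSymbol_smul_fourier v w f)

lemma rieszTransform_sum {ι : Type*} [Fintype ι] (v w : V) (f : ι → 𝓢(V, ℂ)) (x : V) :
    rieszTransform v w (∑ j, f j) x = ∑ j, rieszTransform v w (f j) x := by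
  simp only [rieszTransform, FourierTransform.fourier_sum, sum_apply, Finset.smul_sum]
  exact fourierInv_sum_apply (fun j ↦ integrable_rieszSymbol_smul_fourier v w (f j)) x

lemma integrable_norm_mul_norm_rieszSymbol_smul_fourier (v w : V) (f : 𝓢(V, ℂ)) :
    Integrable fun η ↦ ‖η‖ * ‖rieszSymbol v w η • 𝓕 f η‖ := by
  have hsmul := (integrable_rieszSymbol_smul ((𝓕 f).integrable_pow_mul volume 1) v w).norm
  simpa only [norm_smul, norm_mul, mul_left_comm, norm_norm, pow_one] using hsmul

lemma differentiable_rieszTransform (v w : V) (f : 𝓢(V, ℂ)) :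
    Differentiable ℝ (rieszTransform v w f) :=
  differentiable_fourierInv (integrable_rieszSymbol_smul_fourier v w f)
    (integrable_norm_mul_norm_rieszSymbol_smul_fourier v w f)

lemma fderiv_rieszTransform_apply (u v w : V) (f : 𝓢(V, ℂ)) (x : V) :
    fderiv ℝ (rieszTransform u v f) x w = rieszTransform v w (∂_{u} f) x := by
  rw [rieszTransform, fderiv_fourierInv_apply (integrable_rieszSymbol_smul_fourier u v f)
    (integrable_norm_mul_norm_rieszSymbol_smul_fourier u v f)]
  refine congrArg (fun φ : V → ℂ ↦ 𝓕⁻ φ x) (funext fun η ↦ ?_)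
  rw [fourier_lineDeriv_apply]
  simp only [rieszSymbol, Complex.real_smul]
  push_cast
  ring

lemma exists_eLpNorm_rieszTransform_heat_le {ι : Type*} [Fintype ι]
    (b : OrthonormalBasis ι ℝ V) {p q : ℝ} (hpq : p.HolderConjugate q) :
    ∃ C > 0, ∀ (f : 𝓢(V, ℂ)) (i j : ι) (ε : ℝ), 0 < ε →
      eLpNorm (rieszTransform (b i) (b j) (heat ε f)) (ENNReal.ofReal p) ≤
        ENNReal.ofReal (C * LqNorm volume p f) := by
  obtain ⟨C, hC, hbilinear⟩ := exists_norm_integral_heatSymbol_rieszSymbol_le b hpq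
  refine ⟨C, hC, fun f i j ε hε ↦ eLpNorm_le_of_forall_norm_integral_mul_le hpq
    (mul_nonneg hC.le (LqNorm_nonneg _ _ _)) (continuous_rieszTransform _ _ _) fun g ↦ ?_⟩
  have hpair := hbilinear f g i j ε hε
  rw [rieszTransform, integral_fourierInv_mul (integrable_rieszSymbol_smul_fourier _ _ _)]
  simp only [fourier_heat, smul_mul_assoc, smul_comm (rieszSymbol _ _ _)]
  rwa [mul_assoc]

lemma integrable_norm_inv_mul_schwartz (hV : 2 ≤ Module.finrank ℝ V) (f : 𝓢(V, ℂ)) :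
    Integrable fun η ↦ ‖η‖⁻¹ * ‖f η‖ := by
  have hmeas : Measurable fun η : V ↦ ‖η‖⁻¹ := measurable_norm.inv
  obtain ⟨C, hC⟩ : ∃ C, ∀ η, ‖f η‖ ≤ C := ⟨_, fun η ↦ f.norm_le_seminorm ℝ η⟩
  have hball : IntegrableOn (fun η : V ↦ ‖η‖⁻¹) (Metric.ball 0 1) :=
    integrableOn_ball_of_norm_le_rpow (C := 1) (α := 1) (by omega) (by exact_mod_cast hV)
      (.of_forall fun η ↦ by simp [rpow_neg_one]) hmeas.aestronglyMeasurable
  rw [← integrableOn_univ, ← Set.union_compl_self (Metric.ball 0 1)]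
  refine .union (hball.mul_bdd (c := C) f.continuous.norm.aestronglyMeasurable
    (.of_forall fun η ↦ by simpa using hC η))
    (f.integrable.norm.integrableOn.bdd_mul (c := 1) hmeas.aestronglyMeasurable
      ((ae_restrict_iff' measurableSet_ball.compl).2 (.of_forall fun η hη ↦ ?_)))
  simpa using inv_le_one_of_one_le₀ (a := ‖η‖) (by simpa using hη)

lemma integrable_pow_mul_norm_inv_mul_schwartz (hV : 2 ≤ Module.finrank ℝ V) (f : 𝓢(V, ℂ))
    (n : ℕ) : Integrable fun η ↦ ‖η‖ ^ n * (‖η‖⁻¹ * ‖f η‖) := by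
  have hV' : Nontrivial V := Module.nontrivial_of_finrank_pos (R := ℝ) (by omega)
  rcases n with _ | n
  · simpa using integrable_norm_inv_mul_schwartz hV f
  · refine (f.integrable_pow_mul volume n).congr ?_
    filter_upwards [Measure.ae_ne volume 0] with η hη
    have := norm_ne_zero_iff.2 hη
    field_simp
    ring

lemma aestronglyMeasurable_poissonSymbol_smul_fourier (v : V) (f : 𝓢(V, ℂ)) :
    AEStronglyMeasurable fun η ↦ poissonSymbol v η • Complex.I • 𝓕 f η :=
  (measurable_poissonSymbol v).aestronglyMeasurable.smul
    ((𝓕 f).continuous.const_smul Complex.I).aestronglyMeasurable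

lemma integrable_pow_mul_norm_poissonSymbol_smul_fourier (hV : 2 ≤ Module.finrank ℝ V) (v : V)
    (f : 𝓢(V, ℂ)) (n : ℕ) :
    Integrable fun η ↦ ‖η‖ ^ n * ‖poissonSymbol v η • Complex.I • 𝓕 f η‖ := by
  refine ((integrable_pow_mul_norm_inv_mul_schwartz hV (𝓕 f) n).const_mul ‖v‖).mono'
    ((continuous_norm.pow n).aestronglyMeasurable.mul
      (aestronglyMeasurable_poissonSymbol_smul_fourier v f).norm) (.of_forall fun η ↦ ?_)
  rw [norm_mul, norm_norm, norm_pow, norm_norm, norm_smul, norm_smul, Complex.norm_I, one_mul]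
  calc ‖η‖ ^ n * (‖poissonSymbol v η‖ * ‖𝓕 f η‖)
      ≤ ‖η‖ ^ n * (‖v‖ * ‖η‖⁻¹ * ‖𝓕 f η‖) := by gcongr; exact norm_poissonSymbol_le v η
    _ = ‖v‖ * (‖η‖ ^ n * (‖η‖⁻¹ * ‖𝓕 f η‖)) := by ring

lemma integrable_poissonSymbol_smul_fourier (hV : 2 ≤ Module.finrank ℝ V) (v : V)
    (f : 𝓢(V, ℂ)) : Integrable fun η ↦ poissonSymbol v η • Complex.I • 𝓕 f η :=
  (integrable_norm_iff (aestronglyMeasurable_poissonSymbol_smul_fourier v f)).1 <| by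
    simpa only [pow_zero, one_mul] using
      integrable_pow_mul_norm_poissonSymbol_smul_fourier hV v f 0

/-- The function `Δ⁻¹ ∂ᵥ f`, defined by its Fourier symbol. -/
noncomputable def poissonPotential (v : V) (f : 𝓢(V, ℂ)) : V → ℂ :=
  𝓕⁻ fun η ↦ poissonSymbol v η • Complex.I • 𝓕 f η

lemma contDiff_poissonPotential (hV : 2 ≤ Module.finrank ℝ V) (v : V) (f : 𝓢(V, ℂ)) :
    ContDiff ℝ ∞ (poissonPotential v f) :=
  contDiff_fourierInv (integrable_pow_mul_norm_poissonSymbol_smul_fourier hV v f)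

lemma fderiv_poissonPotential_apply (hV : 2 ≤ Module.finrank ℝ V) (v w : V) (f : 𝓢(V, ℂ))
    (x : V) : fderiv ℝ (poissonPotential v f) x w = rieszTransform v w f x := by
  have hmoment : Integrable fun η ↦ ‖η‖ * ‖poissonSymbol v η • Complex.I • 𝓕 f η‖ := by
    simpa only [pow_one] using integrable_pow_mul_norm_poissonSymbol_smul_fourier hV v f 1
  rw [poissonPotential,
    fderiv_fourierInv_apply (integrable_poissonSymbol_smul_fourier hV v f) hmoment]
  refine congrArg (fun φ : V → ℂ ↦ 𝓕⁻ φ x) (funext fun η ↦ ?_)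
  rw [smul_comm Complex.I, smul_smul, two_pi_inner_mul_poissonSymbol, smul_smul Complex.I,
    Complex.I_mul_I, neg_one_smul, smul_neg, neg_smul, neg_neg]

variable {ι : Type*} [Fintype ι]

/-- The solution `U = ∑ⱼ Δ⁻¹ ∂_{eⱼ} fⱼ` of `ΔU = ∑ⱼ ∂_{eⱼ} fⱼ`. -/
noncomputable def poissonSolution (e : ι → V) (f : ι → 𝓢(V, ℂ)) : V → ℂ :=
  fun x ↦ ∑ j, poissonPotential (e j) (f j) x

lemma contDiff_poissonSolution (hV : 2 ≤ Module.finrank ℝ V) (e : ι → V) (f : ι → 𝓢(V, ℂ)) :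
    ContDiff ℝ ∞ (poissonSolution e f) :=
  .sum fun j _ ↦ contDiff_poissonPotential hV (e j) (f j)

lemma fderiv_poissonSolution_apply (hV : 2 ≤ Module.finrank ℝ V) (e : ι → V) (f : ι → 𝓢(V, ℂ))
    (x v : V) :
    fderiv ℝ (poissonSolution e f) x v = ∑ j, rieszTransform (e j) v (f j) x := by
  unfold poissonSolution
  rw [fderiv_fun_sum fun j _ ↦
    (contDiff_poissonPotential hV (e j) (f j)).differentiable (by simp) x]
  simp only [sum_apply, fderiv_poissonPotential_apply hV]

lemma fderiv_fderiv_poissonSolution_apply (hV : 2 ≤ Module.finrank ℝ V) (e : ι → V)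
    (f : ι → 𝓢(V, ℂ)) (x v w : V) :
    fderiv ℝ (fderiv ℝ (poissonSolution e f)) x v w =
      rieszTransform w v (∑ j, ∂_{e j} (f j)) x := by
  have hdiff : DifferentiableAt ℝ (fderiv ℝ (poissonSolution e f)) x :=
    ((contDiff_poissonSolution hV e f).fderiv_right (m := 1) (by norm_cast)).differentiable
      one_ne_zero x
  have happly : fderiv ℝ (fun y ↦ fderiv ℝ (poissonSolution e f) y w) x v =
      fderiv ℝ (fderiv ℝ (poissonSolution e f)) x v w := by
    rw [fderiv_clm_apply hdiff (differentiableAt_const w)]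
    simp
  rw [← happly, rieszTransform_sum]
  simp only [fderiv_poissonSolution_apply hV]
  rw [fderiv_fun_sum fun j _ ↦ differentiable_rieszTransform (e j) w (f j) x]
  simp only [sum_apply, fderiv_rieszTransform_apply]

end RieszTransform

section SolutionEstimates

lemma LqNorm_le_of_eLpNorm_le {α E : Type*} [MeasurableSpace α] [NormedAddCommGroup E]
    {μ : Measure α} {p K : ℝ} (hp : 0 < p) (hK : 0 ≤ K) {f : α → E}
    (hf : AEStronglyMeasurable f μ) (h : eLpNorm f (ENNReal.ofReal p) μ ≤ ENNReal.ofReal K) :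
    LqNorm μ p f ≤ K := by
  rw [LqNorm_eq_toReal_eLpNorm hp ⟨hf, h.trans_lt ENNReal.ofReal_lt_top⟩]
  exact ENNReal.toReal_le_of_le_ofReal hK h

variable {ι V : Type*} [Fintype ι] [NormedAddCommGroup V] [InnerProductSpace ℝ V]

lemma opNorm_le_sum_norm_apply_orthonormalBasis {E : Type*} [NormedAddCommGroup E]
    [NormedSpace ℝ E] (b : OrthonormalBasis ι ℝ V) (L : V →L[ℝ] E) : ‖L‖ ≤ ∑ i, ‖L (b i)‖ := by
  refine L.opNorm_le_bound (Finset.sum_nonneg fun i _ ↦ norm_nonneg _) fun v ↦ ?_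
  calc ‖L v‖ = ‖∑ i, ⟪b i, v⟫ • L (b i)‖ := by simp only [← map_smul, ← map_sum, b.sum_repr']
    _ ≤ ∑ i, ‖⟪b i, v⟫ • L (b i)‖ := norm_sum_le _ _
    _ ≤ ∑ i, ‖L (b i)‖ * ‖v‖ := by
      gcongr with i
      rw [norm_smul, mul_comm]
      gcongr
      simpa using norm_inner_le_norm (𝕜 := ℝ) (b i) v
    _ = (∑ i, ‖L (b i)‖) * ‖v‖ := (Finset.sum_mul _ _ _).symm

lemma eLpNorm_le_card_mul_of_forall_apply_orthonormalBasis {α E : Type*} [MeasurableSpace α]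
    {μ : Measure α} [NormedAddCommGroup E] [NormedSpace ℝ E] (b : OrthonormalBasis ι ℝ V)
    {p K : ENNReal} (hp : 1 ≤ p) {L : α → V →L[ℝ] E} (hL : AEStronglyMeasurable L μ)
    (h : ∀ i, eLpNorm (fun x ↦ L x (b i)) p μ ≤ K) :
    eLpNorm L p μ ≤ Fintype.card ι * K := by
  calc eLpNorm L p μ ≤ eLpNorm (∑ i, fun x ↦ ‖L x (b i)‖) p μ :=
        eLpNorm_mono_real fun x ↦ by
          simpa only [Finset.sum_apply] using opNorm_le_sum_norm_apply_orthonormalBasis b (L x)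
    _ ≤ ∑ i, eLpNorm (fun x ↦ ‖L x (b i)‖) p μ :=
        eLpNorm_sum_le (fun i _ ↦ (hL.apply_continuousLinearMap (b i)).norm) hp
    _ ≤ ∑ _i : ι, K := by
        gcongr with i
        simpa only [eLpNorm_norm] using h i
    _ = Fintype.card ι * K := by simp

variable [MeasurableSpace V] [BorelSpace V] [FiniteDimensional ℝ V]

lemma exists_LqNorm_fderiv_poissonSolution_heat_le (hV : 2 ≤ Module.finrank ℝ V)
    (b : OrthonormalBasis ι ℝ V) {p q : ℝ} (hpq : p.HolderConjugate q) :
    ∃ C ≥ 0, ∀ (f : ι → 𝓢(V, ℂ)) (ε : ℝ), 0 < ε →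
      LqNorm volume p (fderiv ℝ (poissonSolution b fun j ↦ heat ε (f j))) ≤
        C * ∑ j, LqNorm volume p (f j) := by
  obtain ⟨C, hC, hriesz⟩ := exists_eLpNorm_rieszTransform_heat_le b hpq
  have hp : 1 ≤ ENNReal.ofReal p := by simpa using hpq.lt.le
  refine ⟨Fintype.card ι * C, by positivity, fun f ε hε ↦ ?_⟩
  set U := poissonSolution b fun j ↦ heat ε (f j)
  have hnonneg (j : ι) : 0 ≤ C * LqNorm volume p (f j) :=
    mul_nonneg hC.le (LqNorm_nonneg _ _ _)
  have hmeas : AEStronglyMeasurable (fderiv ℝ U) :=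
    ((contDiff_poissonSolution hV b _).continuous_fderiv (by simp)).aestronglyMeasurable
  rw [mul_assoc, Finset.mul_sum]
  refine LqNorm_le_of_eLpNorm_le hpq.pos
    (mul_nonneg (Nat.cast_nonneg _) (Finset.sum_nonneg fun j _ ↦ hnonneg j)) hmeas ?_
  rw [ENNReal.ofReal_mul (Nat.cast_nonneg _), ENNReal.ofReal_natCast,
    ENNReal.ofReal_sum_of_nonneg fun j _ ↦ hnonneg j]
  refine eLpNorm_le_card_mul_of_forall_apply_orthonormalBasis b hp hmeas fun i ↦ ?_
  have hsum : (fun x ↦ fderiv ℝ U x (b i)) =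
      ∑ j, rieszTransform (b j) (b i) (heat ε (f j)) := by
    ext x
    rw [fderiv_poissonSolution_apply hV, Finset.sum_apply]
  rw [hsum]
  exact (eLpNorm_sum_le (fun j _ ↦ (continuous_rieszTransform _ _ _).aestronglyMeasurable) hp).trans
    (Finset.sum_le_sum fun j _ ↦ hriesz (f j) j i ε hε)

lemma norm_iteratedFDeriv_two_eq {E F : Type*} [NormedAddCommGroup E] [NormedSpace ℝ E]
    [NormedAddCommGroup F] [NormedSpace ℝ F] (u : E → F) (x : E) :
    ‖iteratedFDeriv ℝ 2 u x‖ = ‖fderiv ℝ (fderiv ℝ u) x‖ :=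
  norm_iteratedFDeriv_fderiv.symm.trans (norm_iteratedFDeriv_one _)

lemma exists_LqNorm_iteratedFDeriv_two_poissonSolution_heat_le (hV : 2 ≤ Module.finrank ℝ V)
    (b : OrthonormalBasis ι ℝ V) {p q : ℝ} (hpq : p.HolderConjugate q) :
    ∃ C ≥ 0, ∀ (f : ι → 𝓢(V, ℂ)) (ε : ℝ), 0 < ε →
      LqNorm volume p (iteratedFDeriv ℝ 2 (poissonSolution b fun j ↦ heat ε (f j))) ≤
        C * LqNorm volume p (∑ j, ∂_{b j} (f j) : 𝓢(V, ℂ)) := by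
  obtain ⟨C, hC, hriesz⟩ := exists_eLpNorm_rieszTransform_heat_le b hpq
  have hp : 1 ≤ ENNReal.ofReal p := by simpa using hpq.lt.le
  refine ⟨Fintype.card ι * (Fintype.card ι * C), by positivity, fun f ε hε ↦ ?_⟩
  set U := poissonSolution b fun j ↦ heat ε (f j)
  set d := ∑ j, ∂_{b j} (f j)
  have hsmooth : ContDiff ℝ 1 (fderiv ℝ U) :=
    (contDiff_poissonSolution hV b _).fderiv_right (by norm_cast)
  have hnonneg : 0 ≤ C * LqNorm volume p d := mul_nonneg hC.le (LqNorm_nonneg _ _ _)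
  have happly (k i : ι) :
      eLpNorm (fun x ↦ fderiv ℝ (fderiv ℝ U) x (b k) (b i)) (ENNReal.ofReal p) ≤
        ENNReal.ofReal (C * LqNorm volume p d) := by
    refine (hriesz d i k ε hε).trans_eq' (congrArg (eLpNorm · _ _) (funext fun x ↦ ?_))
    rw [fderiv_fderiv_poissonSolution_apply hV, map_sum]
    simp only [lineDeriv_heat]
  have hmeas : AEStronglyMeasurable (fderiv ℝ (fderiv ℝ U)) :=
    (hsmooth.continuous_fderiv one_ne_zero).aestronglyMeasurable
  have hbound : LqNorm volume p (fderiv ℝ (fderiv ℝ U)) ≤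
      Fintype.card ι * (Fintype.card ι * (C * LqNorm volume p d)) := by
    refine LqNorm_le_of_eLpNorm_le hpq.pos (by positivity) hmeas ?_
    rw [ENNReal.ofReal_mul (Nat.cast_nonneg _), ENNReal.ofReal_mul (Nat.cast_nonneg _),
      ENNReal.ofReal_natCast]
    exact eLpNorm_le_card_mul_of_forall_apply_orthonormalBasis b hp hmeas fun k ↦
      eLpNorm_le_card_mul_of_forall_apply_orthonormalBasis b hp
        (hmeas.apply_continuousLinearMap _) (happly k)
  simpa only [LqNorm, norm_iteratedFDeriv_two_eq, mul_assoc] using hbound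

end SolutionEstimates

/-! ### The regularized solution on Euclidean space -/

section VectorField

variable {ι : Type*} [Fintype ι]

/-- The `j`-th component of a Schwartz vector field, as a Schwartz function. -/
noncomputable def schwartzComponent {V : Type*} [NormedAddCommGroup V] [NormedSpace ℝ V]
    (F : 𝓢(V, EuclideanSpace ℂ ι)) (j : ι) : 𝓢(V, ℂ) :=
  SchwartzMap.postcompCLM (EuclideanSpace.proj j : EuclideanSpace ℂ ι →L[ℂ] ℂ) F

lemma sum_LqNorm_schwartzComponent_le {V : Type*} [NormedAddCommGroup V] [InnerProductSpace ℝ V]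
    [FiniteDimensional ℝ V] [MeasurableSpace V] [BorelSpace V] {p : ℝ} (hp : 0 < p)
    (F : 𝓢(V, EuclideanSpace ℂ ι)) :
    ∑ j, LqNorm volume p (schwartzComponent F j) ≤ Fintype.card ι * LqNorm volume p F := by
  have hcomponent (j : ι) : LqNorm volume p (schwartzComponent F j) ≤ LqNorm volume p F := by
    rw [LqNorm_eq_toReal_eLpNorm hp ((schwartzComponent F j).memLp _ _),
      LqNorm_eq_toReal_eLpNorm hp (F.memLp _ _)]
    exact ENNReal.toReal_mono (F.memLp _ _).eLpNorm_ne_top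
      (eLpNorm_mono fun x ↦ PiLp.norm_apply_le (F x) j)
  simpa using Finset.sum_le_sum fun j (_ : j ∈ Finset.univ) ↦ hcomponent j

lemma sum_lineDeriv_schwartzComponent_apply
    (F : 𝓢(EuclideanSpace ℝ ι, EuclideanSpace ℂ ι)) [DecidableEq ι] (x : EuclideanSpace ℝ ι) :
    (∑ j, ∂_{EuclideanSpace.basisFun ι ℝ j} (schwartzComponent F j)) x =
      ∑ j, fderiv ℝ (fun y ↦ F y j) x (EuclideanSpace.single j 1) := by
  simp only [sum_apply, SchwartzMap.lineDerivOp_apply_eq_fderiv, EuclideanSpace.basisFun_apply]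
  rfl

lemma integral_exp_smul_apply (F : 𝓢(EuclideanSpace ℝ ι, EuclideanSpace ℂ ι))
    (η : EuclideanSpace ℝ ι) (j : ι) :
    (∫ y, Complex.exp (-Complex.I * (⟪y, (2 * π) • η⟫ : ℂ)) • F y) j =
      𝓕 (schwartzComponent F j) η := by
  have hexp (y : EuclideanSpace ℝ ι) : Complex.exp (-Complex.I * (⟪y, (2 * π) • η⟫ : ℂ)) =
      𝐞 (-⟪y, η⟫) := by
    rw [inner_smul_right, Real.fourierChar_apply]
    push_cast
    ring_nf
  simp only [hexp, ← Circle.smul_def]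
  rw [SchwartzMap.fourier_coe, Real.fourier_eq]
  exact ((EuclideanSpace.proj j : EuclideanSpace ℂ ι →L[ℂ] ℂ).integral_comp_comm
    ((Real.fourierIntegral_convergent_iff η).2 F.integrable)).symm

/-- The integrand of the oscillatory integral representing the Gaussian-regularized solution of
`ΔU = div F`, in the normalization of the Fourier transform without `2π` in the exponent. -/
noncomputable def poissonIntegrand (ε : ℝ) (F : 𝓢(EuclideanSpace ℝ ι, EuclideanSpace ℂ ι))
    (x ξ : EuclideanSpace ℝ ι) : ℂ :=
  Complex.exp (Complex.I * (⟪x, ξ⟫ : ℂ)) * Complex.exp (-(ε : ℂ) * (‖ξ‖ : ℂ) ^ 2) *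
    (Complex.I * ∑ j, (ξ j : ℂ) *
      (∫ y, Complex.exp (-Complex.I * (⟪y, ξ⟫ : ℂ)) • F y) j) / (‖ξ‖ : ℂ) ^ 2

lemma poissonIntegrand_two_pi_smul {ε : ℝ} (hε : 0 < ε)
    (F : 𝓢(EuclideanSpace ℝ ι, EuclideanSpace ℂ ι)) (x η : EuclideanSpace ℝ ι) :
    poissonIntegrand ε F x ((2 * π) • η) =
      -(𝐞 ⟪η, x⟫ • ∑ j, poissonSymbol (EuclideanSpace.basisFun ι ℝ j) η • Complex.I •
        𝓕 (heat ε (schwartzComponent F j)) η) := by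
  have hnorm : ‖(2 * π) • η‖ = 2 * π * ‖η‖ := by
    rw [norm_smul, norm_of_nonneg (by positivity)]
  have hchar : Complex.exp (Complex.I * (⟪x, (2 * π) • η⟫ : ℂ)) = 𝐞 ⟪η, x⟫ := by
    rw [inner_smul_right, Real.fourierChar_apply, real_inner_comm, mul_comm]
  have hgauss : Complex.exp (-(ε : ℂ) * ((2 * π * ‖η‖ : ℝ) : ℂ) ^ 2) = heatSymbol ε η := by
    rw [heatSymbol, max_eq_left hε.le, Complex.ofReal_exp]
    push_cast
    ring_nf
  simp only [poissonIntegrand, integral_exp_smul_apply, hchar, hnorm, hgauss, fourier_heat,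
    poissonSymbol, EuclideanSpace.inner_basisFun_real, Circle.smul_def, smul_eq_mul,
    PiLp.smul_apply, Complex.real_smul, Finset.mul_sum, Finset.sum_div,
    ← Finset.sum_neg_distrib]
  refine Finset.sum_congr rfl fun j _ ↦ ?_
  rcases eq_or_ne η 0 with rfl | hη
  · simp
  · have hη' : (‖η‖ : ℂ) ≠ 0 := by simpa using hη
    have hπ : (π : ℂ) ≠ 0 := by simp
    push_cast
    field_simp

lemma integrable_poissonSymbol_smul_fourier_heat (hι : 2 ≤ Fintype.card ι) (ε : ℝ)
    (F : 𝓢(EuclideanSpace ℝ ι, EuclideanSpace ℂ ι)) (j : ι) :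
    Integrable fun η ↦ poissonSymbol (EuclideanSpace.basisFun ι ℝ j) η • Complex.I •
      𝓕 (heat ε (schwartzComponent F j)) η :=
  integrable_poissonSymbol_smul_fourier (by simpa using hι) _ _

lemma integrable_poissonIntegrand (hι : 2 ≤ Fintype.card ι) {ε : ℝ} (hε : 0 < ε)
    (F : 𝓢(EuclideanSpace ℝ ι, EuclideanSpace ℂ ι)) (x : EuclideanSpace ℝ ι) :
    Integrable (poissonIntegrand ε F x) := by
  rw [← integrable_comp_smul_iff volume _ (by positivity : 2 * π ≠ 0)]
  simp only [poissonIntegrand_two_pi_smul hε]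
  have hsum := integrable_finsetSum Finset.univ fun j _ ↦
    integrable_poissonSymbol_smul_fourier_heat hι ε F j
  simpa using ((Real.fourierIntegral_convergent_iff (-x)).2 hsum).neg

lemma poissonSolution_heat_eq_integral (hι : 2 ≤ Fintype.card ι) {ε : ℝ} (hε : 0 < ε)
    (F : 𝓢(EuclideanSpace ℝ ι, EuclideanSpace ℂ ι)) (x : EuclideanSpace ℝ ι) :
    poissonSolution (EuclideanSpace.basisFun ι ℝ) (fun j ↦ heat ε (schwartzComponent F j)) x =
      -((((2 * π) ^ Fintype.card ι : ℝ) : ℂ)⁻¹ * ∫ ξ in {0}ᶜ, poissonIntegrand ε F x ξ) := by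
  have : Nontrivial (EuclideanSpace ℝ ι) :=
    Module.nontrivial_of_finrank_pos (R := ℝ) (by rw [finrank_euclideanSpace]; omega)
  have hscale := Measure.integral_comp_smul volume (poissonIntegrand ε F x) (2 * π)
  simp only [poissonIntegrand_two_pi_smul hε] at hscale
  rw [integral_neg, finrank_euclideanSpace, abs_of_pos (by positivity), Complex.real_smul,
    Complex.ofReal_inv] at hscale
  rw [restrict_compl_singleton, ← hscale, neg_neg, ← Real.fourierInv_eq, fourierInv_sum_apply
    (integrable_poissonSymbol_smul_fourier_heat hι ε F)]
  rfl

end VectorField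

end

/-- The Riesz-transform-type estimates, uniform in the regularization parameter `ε`,
from the proof of Lemma 3.2: the Gaussian-regularized solution `U^ε` of `ΔU = div F`
satisfies `‖∇U^ε‖_q ≤ C‖F‖_q` and `‖D²U^ε‖_q ≤ C‖div F‖_q`. -/
theorem stmt_10 (N : ℕ) (hN : 2 ≤ N) (q : ℝ) (hq : 1 < q) :
    ∃ C : ℝ, 0 < C ∧ ∀ ε : ℝ, 0 < ε →
      ∀ F : SchwartzMap (EuclideanSpace ℝ (Fin N)) (EuclideanSpace ℂ (Fin N)),
        (∀ x : EuclideanSpace ℝ (Fin N),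
          IntegrableOn (fun ξ : EuclideanSpace ℝ (Fin N) =>
            Complex.exp (Complex.I * (⟪x, ξ⟫ : ℂ)) * Complex.exp (-(ε : ℂ) * (‖ξ‖ : ℂ) ^ 2) *
              (Complex.I * ∑ j : Fin N, (ξ j : ℂ) *
                (∫ y : EuclideanSpace ℝ (Fin N),
                  Complex.exp (-Complex.I * (⟪y, ξ⟫ : ℂ)) • F y) j) /
              (‖ξ‖ : ℂ) ^ 2) {(0 : EuclideanSpace ℝ (Fin N))}ᶜ volume) ∧
        ∃ U : EuclideanSpace ℝ (Fin N) → ℂ,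
          (∀ x, U x = -((((2 * π) ^ N : ℝ) : ℂ)⁻¹ *
              ∫ ξ in {(0 : EuclideanSpace ℝ (Fin N))}ᶜ,
                Complex.exp (Complex.I * (⟪x, ξ⟫ : ℂ)) *
                  Complex.exp (-(ε : ℂ) * (‖ξ‖ : ℂ) ^ 2) *
                  (Complex.I * ∑ j : Fin N, (ξ j : ℂ) *
                    (∫ y : EuclideanSpace ℝ (Fin N),
                      Complex.exp (-Complex.I * (⟪y, ξ⟫ : ℂ)) • F y) j) /
                  (‖ξ‖ : ℂ) ^ 2)) ∧
          ContDiff ℝ (⊤ : ℕ∞) U ∧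
          LqNorm volume q (fun x => fderiv ℝ U x) ≤ C * LqNorm volume q (fun x => F x) ∧
          LqNorm volume q (fun x => iteratedFDeriv ℝ 2 U x) ≤
            C * LqNorm volume q (fun x =>
              ∑ j : Fin N, fderiv ℝ (fun y => F y j) x (EuclideanSpace.single j 1)) := by
  have hcard : 2 ≤ Fintype.card (Fin N) := by simpa using hN
  have hfinrank : 2 ≤ Module.finrank ℝ (EuclideanSpace ℝ (Fin N)) := by simpa using hN
  let b := EuclideanSpace.basisFun (Fin N) ℝ
  obtain ⟨C₁, hC₁, hgradient⟩ :=
    exists_LqNorm_fderiv_poissonSolution_heat_le hfinrank b (.conjExponent hq)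
  obtain ⟨C₂, hC₂, hhessian⟩ :=
    exists_LqNorm_iteratedFDeriv_two_poissonSolution_heat_le hfinrank b (.conjExponent hq)
  have hC₁N : 0 ≤ C₁ * N := by positivity
  refine ⟨C₁ * N + C₂ + 1, by positivity, fun ε hε F ↦
    ⟨fun x ↦ (integrable_poissonIntegrand hcard hε F x).integrableOn,
      poissonSolution b fun j ↦ heat ε (schwartzComponent F j),
      fun x ↦ ?_, contDiff_poissonSolution hfinrank _ _, ?_, ?_⟩⟩
  · simpa only [Fintype.card_fin, poissonIntegrand] using
      poissonSolution_heat_eq_integral hcard hε F x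
  · calc _ ≤ C₁ * ∑ j, LqNorm volume q (schwartzComponent F j) := hgradient _ ε hε
      _ ≤ C₁ * (N * LqNorm volume q F) := by
        gcongr
        simpa using sum_LqNorm_schwartzComponent_le (by linarith) F
      _ ≤ (C₁ * N + C₂ + 1) * LqNorm volume q F := by
        rw [← mul_assoc]
        exact mul_le_mul_of_nonneg_right (by linarith) (LqNorm_nonneg _ _ _)
  · simp only [← sum_lineDeriv_schwartzComponent_apply]
    exact (hhessian _ ε hε).trans
      (mul_le_mul_of_nonneg_right (by linarith) (LqNorm_nonneg _ _ _))
end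

section
/- Let σ ∈ (0, π/2), λ ∈ ℂ with λ ≠ 0 and |arg λ| < π − σ, let ρ₊ > 0, ρ₋ > 0, b ≥ 0, and set A_± = √(ρ_± λ + b²) (principal square roots) and D = ρ₊A₋ + ρ₋A₊. Then D ≠ 0, and for any g₁, g₂ ∈ ℂ the functions w_± : ℝ → ℂ defined by w₊(t) = ((A₋/D) g₁ − (ρ₋/D) g₂) e^{−A₊ t} and w₋(t) = ((−A₊/D) g₁ − (ρ₊/D) g₂) e^{A₋ t} satisfy: (i) ρ₊ λ w₊(t) − w₊''(t) + b² w₊(t) = 0 and ρ₋ λ w₋(t) − w₋''(t) + b² w₋(t) = 0 for all t ∈ ℝ; (ii) the jump conditions ρ₊ w₊(0) − ρ₋ w₋(0) = g₁ and w₊'(0) − w₋'(0) = g₂; (iii) w₊(t) → 0 as t → +∞ and w₋(t) → 0 as t → −∞. -/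
open Real

/-!
Both symbols `ρ_±λ + b²` avoid the cut `(-∞, 0]`, so their principal square roots `A_±` have
positive real part and the decaying solutions on the two sides are `x e^{-A₊t}` and `y e^{A₋t}`.
The jump conditions are then the linear system `ρ₊x - ρ₋y = g₁`, `-A₊x - A₋y = g₂` with determinant
`-D`, and the coefficients are given by Cramer's rule. The determinant does not vanish since `D` is
a positive combination of numbers with positive real part.
-/

section PrincipalRoot

open Complex

theorem re_cpow_one_half_pos {z : ℂ} (hz : z ∈ slitPlane) : 0 < (z ^ ((1 : ℂ) / 2)).re := by
  have norm_add_re_pos : 0 < ‖z‖ + z.re := by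
    rcases mem_slitPlane_iff.1 hz with hre | him
    · positivity
    · linarith [neg_abs_le z.re, abs_re_lt_norm.2 him]
  rw [one_div, cpow_inv_two_re]
  positivity

theorem cpow_one_half_sq (z : ℂ) : (z ^ ((1 : ℂ) / 2)) ^ 2 = z := by
  rw [one_div, cpow_ofNat_inv_pow]

theorem mem_slitPlane_of_abs_arg_lt_pi {z : ℂ} (hz : z ≠ 0) (harg : |z.arg| < π) :
    z ∈ slitPlane :=
  mem_slitPlane_iff_arg.2 ⟨((le_abs_self _).trans_lt harg).ne, hz⟩

theorem ofReal_mul_add_ofReal_mem_slitPlane {z : ℂ} (hz : z ∈ slitPlane) {r s : ℝ} (hr : 0 < r)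
    (hs : 0 ≤ s) : (r : ℂ) * z + s ∈ slitPlane := by
  rw [mem_slitPlane_iff] at hz ⊢
  rw [add_re, re_ofReal_mul, ofReal_re, add_im, im_ofReal_mul, ofReal_im, add_zero]
  exact hz.imp (fun hre => by positivity) (mul_ne_zero hr.ne')

theorem ofReal_mul_add_ofReal_mul_ne_zero {r s : ℝ} (hr : 0 < r) (hs : 0 < s) {z w : ℂ}
    (hz : 0 < z.re) (hw : 0 < w.re) : (r : ℂ) * z + s * w ≠ 0 := by
  refine ne_zero_of_re_pos ?_
  rw [add_re, re_ofReal_mul, re_ofReal_mul]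
  positivity

end PrincipalRoot

section ExponentialMode

open Filter Topology

variable (c : ℂ)

theorem deriv_const_mul_cexp (a : ℂ) :
    deriv (fun t : ℝ => c * Complex.exp (a * t)) = fun t : ℝ => c * a * Complex.exp (a * t) := by
  funext t
  have hasDerivAt_exponent : HasDerivAt (fun t : ℝ => a * (t : ℂ)) (a * 1) t :=
    (Complex.ofRealCLM.hasDerivAt (x := t)).const_mul a
  rw [(hasDerivAt_exponent.cexp.const_mul c).deriv]
  ring

theorem mul_sub_deriv_deriv_const_mul_cexp {a p q : ℂ} (ha : a ^ 2 = p + q) (t : ℝ) :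
    p * (c * Complex.exp (a * t)) - deriv (deriv fun t : ℝ => c * Complex.exp (a * t)) t
      + q * (c * Complex.exp (a * t)) = 0 := by
  rw [deriv_const_mul_cexp, deriv_const_mul_cexp]
  linear_combination -(c * Complex.exp (a * t)) * ha

theorem deriv_const_mul_cexp_zero (a : ℂ) :
    deriv (fun t : ℝ => c * Complex.exp (a * t)) 0 = c * a := by
  rw [deriv_const_mul_cexp]
  simp

theorem tendsto_const_mul_cexp_atTop {a : ℂ} (ha : a.re < 0) :
    Tendsto (fun t : ℝ => c * Complex.exp (a * t)) atTop (𝓝 0) := by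
  have tendsto_exp : Tendsto (fun t : ℝ => Complex.exp (a * t)) atTop (𝓝 0) := by
    simpa [Complex.tendsto_exp_nhds_zero_iff] using tendsto_id.const_mul_atTop_of_neg ha
  simpa using tendsto_exp.const_mul c

theorem tendsto_const_mul_cexp_atBot {a : ℂ} (ha : 0 < a.re) :
    Tendsto (fun t : ℝ => c * Complex.exp (a * t)) atBot (𝓝 0) := by
  have tendsto_reflected := (tendsto_const_mul_cexp_atTop (a := -a) c (by simpa)).comp
    tendsto_neg_atBot_atTop
  simpa [Function.comp_def] using tendsto_reflected

end ExponentialMode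

section Cramer

variable {K : Type*} [Field K] {p m A B D : K}

theorem value_jump_of_cramer (hD : D = p * B + m * A) (hD₀ : D ≠ 0) (g h : K) :
    p * (B / D * g - m / D * h) - m * (-A / D * g - p / D * h) = g := by
  field_simp
  rw [hD]
  ring

theorem deriv_jump_of_cramer (hD : D = p * B + m * A) (hD₀ : D ≠ 0) (g h : K) :
    (B / D * g - m / D * h) * -A - (-A / D * g - p / D * h) * B = h := by
  field_simp
  rw [hD]
  ring

end Cramer

theorem stmt_12_general {lam b : ℂ} {ρp ρm : ℝ} (hρp : 0 < ρp) (hρm : 0 < ρm)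
    (hp : (ρp : ℂ) * lam + b ^ 2 ∈ Complex.slitPlane)
    (hm : (ρm : ℂ) * lam + b ^ 2 ∈ Complex.slitPlane) {Ap Am D : ℂ}
    (hAp : Ap = ((ρp : ℂ) * lam + b ^ 2) ^ ((1 : ℂ) / 2))
    (hAm : Am = ((ρm : ℂ) * lam + b ^ 2) ^ ((1 : ℂ) / 2))
    (hD : D = (ρp : ℂ) * Am + (ρm : ℂ) * Ap) {g₁ g₂ : ℂ} {wp wm : ℝ → ℂ}
    (hwp : wp = fun t : ℝ =>
      ((Am / D) * g₁ - ((ρm : ℂ) / D) * g₂) * Complex.exp (-Ap * (t : ℂ)))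
    (hwm : wm = fun t : ℝ =>
      ((-Ap / D) * g₁ - ((ρp : ℂ) / D) * g₂) * Complex.exp (Am * (t : ℂ))) :
    D ≠ 0 ∧
    (∀ t : ℝ, (ρp : ℂ) * lam * wp t - deriv (deriv wp) t + b ^ 2 * wp t = 0) ∧
    (∀ t : ℝ, (ρm : ℂ) * lam * wm t - deriv (deriv wm) t + b ^ 2 * wm t = 0) ∧
    (ρp : ℂ) * wp 0 - (ρm : ℂ) * wm 0 = g₁ ∧
    deriv wp 0 - deriv wm 0 = g₂ ∧
    Filter.Tendsto wp Filter.atTop (nhds 0) ∧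
    Filter.Tendsto wm Filter.atBot (nhds 0) := by
  have re_Ap_pos : 0 < Ap.re := hAp ▸ re_cpow_one_half_pos hp
  have re_Am_pos : 0 < Am.re := hAm ▸ re_cpow_one_half_pos hm
  have neg_Ap_sq : (-Ap) ^ 2 = ρp * lam + b ^ 2 := by rw [neg_sq, hAp, cpow_one_half_sq]
  have Am_sq : Am ^ 2 = ρm * lam + b ^ 2 := by rw [hAm, cpow_one_half_sq]
  have D_ne_zero : D ≠ 0 := hD ▸ ofReal_mul_add_ofReal_mul_ne_zero hρp hρm re_Am_pos re_Ap_pos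
  subst hwp hwm
  refine ⟨D_ne_zero, mul_sub_deriv_deriv_const_mul_cexp _ neg_Ap_sq,
    mul_sub_deriv_deriv_const_mul_cexp _ Am_sq, ?value_jump, ?deriv_jump,
    tendsto_const_mul_cexp_atTop _ (by simpa using re_Ap_pos),
    tendsto_const_mul_cexp_atBot _ re_Am_pos⟩
  case value_jump => simpa using value_jump_of_cramer hD D_ne_zero g₁ g₂
  case deriv_jump =>
    simpa only [deriv_const_mul_cexp_zero] using deriv_jump_of_cramer hD D_ne_zero g₁ g₂

/-- The explicit solution formula for the Fourier-transformed two-phase interface system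
(3.8): with `A_± = √(ρ_±λ + b²)` and `D = ρ₊A₋ + ρ₋A₊ ≠ 0`, the functions
`w₊(t) = ((A₋/D)g₁ − (ρ₋/D)g₂) e^{−A₊t}` and `w₋(t) = ((−A₊/D)g₁ − (ρ₊/D)g₂) e^{A₋t}`
solve the ODEs with jump conditions and decay at `±∞`. -/
theorem stmt_12 (σ : ℝ) (hσ : σ ∈ Set.Ioo 0 (π / 2)) (lam : ℂ) (hlam0 : lam ≠ 0)
    (hlam : |lam.arg| < π - σ) (ρp ρm : ℝ) (hρp : 0 < ρp) (hρm : 0 < ρm)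
    (b : ℝ) (hb : 0 ≤ b) (Ap Am D : ℂ)
    (hAp : Ap = ((ρp : ℂ) * lam + (b : ℂ) ^ 2) ^ ((1 : ℂ) / 2))
    (hAm : Am = ((ρm : ℂ) * lam + (b : ℂ) ^ 2) ^ ((1 : ℂ) / 2))
    (hD : D = (ρp : ℂ) * Am + (ρm : ℂ) * Ap)
    (g₁ g₂ : ℂ) (wp wm : ℝ → ℂ)
    (hwp : wp = fun t : ℝ =>
      ((Am / D) * g₁ - ((ρm : ℂ) / D) * g₂) * Complex.exp (-Ap * (t : ℂ)))
    (hwm : wm = fun t : ℝ =>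
      ((-Ap / D) * g₁ - ((ρp : ℂ) / D) * g₂) * Complex.exp (Am * (t : ℂ))) :
    D ≠ 0 ∧
    (∀ t : ℝ, (ρp : ℂ) * lam * wp t - deriv (deriv wp) t + (b : ℂ) ^ 2 * wp t = 0) ∧
    (∀ t : ℝ, (ρm : ℂ) * lam * wm t - deriv (deriv wm) t + (b : ℂ) ^ 2 * wm t = 0) ∧
    (ρp : ℂ) * wp 0 - (ρm : ℂ) * wm 0 = g₁ ∧
    deriv wp 0 - deriv wm 0 = g₂ ∧
    Filter.Tendsto wp Filter.atTop (nhds 0) ∧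
    Filter.Tendsto wm Filter.atBot (nhds 0) := by
  have hlam_slit := mem_slitPlane_of_abs_arg_lt_pi hlam0 (hlam.trans (sub_lt_self π hσ.1))
  have symbol_mem_slitPlane {ρ : ℝ} (hρ : 0 < ρ) :
      (ρ : ℂ) * lam + (b : ℂ) ^ 2 ∈ Complex.slitPlane :=
    mod_cast ofReal_mul_add_ofReal_mem_slitPlane hlam_slit hρ (sq_nonneg b)
  exact stmt_12_general hρp hρm (symbol_mem_slitPlane hρp) (symbol_mem_slitPlane hρm)
    hAp hAm hD hwp hwm
end
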